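/- Let 1 ≤ s ≤ ∞. There exists a constant C > 0 such that for every Schwartz function σ on ℝ^{2d} and every Schwartz function f on ℝ^d one has ‖L_σ f‖_{W(L²,L^s)} ≤ C · ‖σ‖_{M^{∞,1}} · ‖f‖_{W(L²,L^s)}. (Weyl operators with symbols in the Sjöstrand class M^{∞,1} are bounded on W(L²,L^s), uniformly in s-compatible norm.) -/

import Mathlib

open MeasureTheory SchwartzMap Complex ENNReal NNReal

noncomputable section

/-- Mixed `L^p`-type norm of an `ℝ≥0∞`-valued function, with the usual
`essSup` modification when `p = ∞`. -/
def lqNorm {α : Type*} [MeasurableSpace α] (μ : Measure α) (p : ℝ≥0∞)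
    (f : α → ℝ≥0∞) : ℝ≥0∞ :=
  if p = ∞ then essSup f μ else (∫⁻ a, f a ^ p.toReal ∂μ) ^ (1 / p.toReal)

/-- Conjugate exponent in `ℝ≥0∞` : `1/p + 1/p' = 1`, with `1' = ∞`, `∞' = 1`. -/
def dualExp (p : ℝ≥0∞) : ℝ≥0∞ :=
  if p = 1 then ∞ else if p = ∞ then 1 else ENNReal.ofReal (p.toReal / (p.toReal - 1))

/-- `1/p` as a real number, with the convention `1/∞ = 0`. -/
def invR (p : ℝ≥0∞) : ℝ := (p⁻¹).toReal

/-- The Gaussian window `G(t) = exp(-π |t|²)` (as a complex-valued function). -/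
def gaussWin {ι : Type*} [Fintype ι] (t : EuclideanSpace ℝ ι) : ℂ :=
  Complex.exp (-(Real.pi * ‖t‖ ^ 2))

/-- Short-time Fourier transform with Gaussian window:
`V_G F (x, ω) = ∫ F t * conj (G (t - x)) * exp (-2πi ω⬝t) dt`. -/
def STFT {ι : Type*} [Fintype ι] (F : EuclideanSpace ℝ ι → ℂ)
    (x ω : EuclideanSpace ℝ ι) : ℂ :=
  ∫ t, F t * (starRingEnd ℂ) (gaussWin (t - x)) *
    Complex.exp (Complex.I * (-(2 * Real.pi * (inner ℝ ω t : ℝ))))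

/-- Modulation space norm `M^{p,q}`. -/
def modNorm {ι : Type*} [Fintype ι] (p q : ℝ≥0∞)
    (F : EuclideanSpace ℝ ι → ℂ) : ℝ≥0∞ :=
  lqNorm volume q fun ω => lqNorm volume p fun x => (‖STFT F x ω‖₊ : ℝ≥0∞)

/-- Wiener amalgam norm `W(𝓕 L^p, L^q)` (local component Fourier–Lebesgue). -/
def wFLNorm {ι : Type*} [Fintype ι] (p q : ℝ≥0∞)
    (F : EuclideanSpace ℝ ι → ℂ) : ℝ≥0∞ :=
  lqNorm volume q fun x => lqNorm volume p fun ω => (‖STFT F x ω‖₊ : ℝ≥0∞)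

/-- The unit cube `[0,1)^d`. -/
def unitCube (d : ℕ) : Set (EuclideanSpace ℝ (Fin d)) :=
  {x | ∀ i, x i ∈ Set.Ico (0 : ℝ) 1}

/-- Wiener amalgam norm
`‖f‖_{W(L^r,L^s)} = ( Σ_{n ∈ ℤ^d} ( ∫_{[0,1)^d} |f(x+n)|^r dx )^{s/r} )^{1/s}`. -/
def wNorm (d : ℕ) (r s : ℝ≥0∞) (f : EuclideanSpace ℝ (Fin d) → ℂ) : ℝ≥0∞ :=
  lqNorm (Measure.count : Measure (Fin d → ℤ)) s fun n =>
    lqNorm (volume.restrict (unitCube d)) r fun x =>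
      (‖f (x + show EuclideanSpace ℝ (Fin d) from WithLp.toLp 2 fun i => (n i : ℝ))‖₊ : ℝ≥0∞)

/-- Pairing `(x, ω) ∈ ℝ^d × ℝ^d ↦ ℝ^{2d}`. -/
def pairE {d : ℕ} (x ω : EuclideanSpace ℝ (Fin d)) :
    EuclideanSpace ℝ (Fin d ⊕ Fin d) :=
  WithLp.toLp 2 fun i => Sum.elim (fun j => x j) (fun j => ω j) i

/-- First (space) component of a point of `ℝ^{2d}`. -/
def xpart {d : ℕ} (z : EuclideanSpace ℝ (Fin d ⊕ Fin d)) :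
    EuclideanSpace ℝ (Fin d) := WithLp.toLp 2 fun i => z (Sum.inl i)

/-- Second (frequency) component of a point of `ℝ^{2d}`. -/
def wpart {d : ℕ} (z : EuclideanSpace ℝ (Fin d ⊕ Fin d)) :
    EuclideanSpace ℝ (Fin d) := WithLp.toLp 2 fun i => z (Sum.inr i)

/-- Fourier transform `f̂(ω) = ∫ f t e^{-2πi t⬝ω} dt`. -/
def fTrans {ι : Type*} [Fintype ι] (f : EuclideanSpace ℝ ι → ℂ)
    (ω : EuclideanSpace ℝ ι) : ℂ :=
  ∫ t, f t * Complex.exp (Complex.I * (-(2 * Real.pi * (inner ℝ t ω : ℝ))))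

/-- Kohn–Nirenberg operator `a(x,D) f (x) = ∫ a(x,ω) f̂(ω) e^{2πi x⬝ω} dω`. -/
def KNop {d : ℕ} (a : EuclideanSpace ℝ (Fin d ⊕ Fin d) → ℂ)
    (f : EuclideanSpace ℝ (Fin d) → ℂ) (x : EuclideanSpace ℝ (Fin d)) : ℂ :=
  ∫ ω, a (pairE x ω) * fTrans f ω *
    Complex.exp (Complex.I * (2 * Real.pi * (inner ℝ x ω : ℝ)))

/-- Weyl operator `L_σ f (x) = ∫∫ e^{2πi (x-y)⬝ω} σ((x+y)/2, ω) f(y) dy dω`. -/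
def weylOp {d : ℕ} (σ : EuclideanSpace ℝ (Fin d ⊕ Fin d) → ℂ)
    (f : EuclideanSpace ℝ (Fin d) → ℂ) (x : EuclideanSpace ℝ (Fin d)) : ℂ :=
  ∫ y, ∫ ω, Complex.exp (Complex.I * (2 * Real.pi * (inner ℝ (x - y) ω : ℝ))) *
    σ (pairE ((2 : ℝ)⁻¹ • (x + y)) ω) * f y

/-- Cross-Wigner distribution
`W(g,f)(x,ω) = ∫ g(x+t/2) conj(f(x−t/2)) e^{−2πi ω⬝t} dt`. -/
def wigner {d : ℕ} (g f : EuclideanSpace ℝ (Fin d) → ℂ)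
    (z : EuclideanSpace ℝ (Fin d ⊕ Fin d)) : ℂ :=
  ∫ t, g (xpart z + (2 : ℝ)⁻¹ • t) * (starRingEnd ℂ) (f (xpart z - (2 : ℝ)⁻¹ • t)) *
    Complex.exp (Complex.I * (-(2 * Real.pi * (inner ℝ (wpart z) t : ℝ))))

end
open MeasureTheory SchwartzMap Complex ENNReal NNReal

open scoped FourierTransform in
theorem aux_plancherel {V : Type*} [NormedAddCommGroup V] [InnerProductSpace ℝ V]
    [FiniteDimensional ℝ V] [MeasurableSpace V] [BorelSpace V] (h : V → ℂ) (hh : Integrable h) :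
    ∫⁻ x, ‖𝓕 h x‖ₑ ^ (2:ℝ) ≤ ∫⁻ x, ‖h x‖ₑ ^ (2:ℝ) := by
  by_cases htop : ∫⁻ x, ‖h x‖ₑ ^ (2:ℝ) = ∞
  · rw [htop]; exact le_top
  have hm : MemLp h 2 := by
    refine ⟨hh.1, ?_⟩
    rw [eLpNorm_lt_top_iff_lintegral_rpow_enorm_lt_top (by norm_num) (by norm_num)]
    simpa using lt_top_iff_ne_top.2 htop
  have key : ∀ g : Lp ℂ 2 (volume : Measure V), ‖g‖ₑ ^ (2:ℝ) = ∫⁻ x, ‖g x‖ₑ ^ (2:ℝ) := by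
    intro g
    rw [Lp.enorm_def, eLpNorm_eq_lintegral_rpow_enorm_toReal (by norm_num) (by norm_num)]
    rw [← ENNReal.rpow_mul]; simp
  have hcont : Continuous (𝓕 h) := VectorFourier.fourierIntegral_continuous
      (L := innerₗ V) (μ := volume) Real.continuous_fourierChar (by exact continuous_inner) hh
  have hae : ∀ᵐ x, 𝓕 h x = (𝓕 (hm.toLp h) : Lp ℂ 2 (volume : Measure V)) x := by
    refine ae_eq_of_integral_contDiff_smul_eq hcont.locallyIntegrable
      ((Lp.memLp _).locallyIntegrable (by norm_num)) ?_
    intro g hg hgs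
    have hgs' : HasCompactSupport (fun x => (g x : ℂ)) := hgs.comp_left (g := fun r : ℝ => (r:ℂ)) (by simp)
    let G : 𝓢(V, ℂ) := hgs'.toSchwartzMap (Complex.ofRealCLM.contDiff.comp hg)
    have hG : ∀ x, G x = (g x : ℂ) := fun x => rfl
    have h1 := congrArg (fun T => T G) (Lp.fourier_toTemperedDistribution_eq (hm.toLp h))
    simp only [TemperedDistribution.fourier_apply] at h1
    rw [Lp.toTemperedDistribution_apply, Lp.toTemperedDistribution_apply] at h1
    have h2 : ∫ x, (𝓕 G) x • (hm.toLp h) x = ∫ x, G x • 𝓕 h x := by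
      have := VectorFourier.integral_fourierIntegral_smul_eq_flip (μ := volume) (ν := volume)
        (L := innerₗ V) (f := G) (g := h) Real.continuous_fourierChar
        (by exact continuous_inner) G.integrable hh
      rw [flip_innerₗ] at this
      refine Eq.trans ?_ this
      refine integral_congr_ae ?_
      filter_upwards [hm.coeFn_toLp] with x hx
      rw [hx]; rfl
    rw [h2] at h1
    simpa [hG] using h1
  have e1 : ∫⁻ x, ‖𝓕 h x‖ₑ ^ (2:ℝ) = ∫⁻ x, ‖(𝓕 (hm.toLp h) : Lp ℂ 2 (volume : Measure V)) x‖ₑ ^ (2:ℝ) := by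
    refine lintegral_congr_ae ?_
    filter_upwards [hae] with x hx
    rw [hx]
  have e2 : ∫⁻ x, ‖h x‖ₑ ^ (2:ℝ) = ∫⁻ x, ‖(hm.toLp h) x‖ₑ ^ (2:ℝ) := by
    refine lintegral_congr_ae ?_
    filter_upwards [hm.coeFn_toLp] with x hx
    rw [hx]
  rw [e1, e2, ← key, ← key, ← ofReal_norm, ← ofReal_norm, Lp.norm_fourier_eq]

theorem aux_minkowski {α β : Type*} [MeasurableSpace α] [MeasurableSpace β] (μ : Measure α)
    (ν : Measure β) [SFinite μ] [SFinite ν] (F : α → β → ℝ≥0∞)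
    (hF : Measurable (Function.uncurry F)) :
    (∫⁻ x, (∫⁻ p, F x p ∂ν) ^ (2:ℝ) ∂μ) ^ (1/2:ℝ) ≤
      ∫⁻ p, (∫⁻ x, F x p ^ (2:ℝ) ∂μ) ^ (1/2:ℝ) ∂ν := by
  have hFx : ∀ x, Measurable (F x) := fun x => hF.comp (by fun_prop : Measurable fun p => (x, p))
  have hFp : ∀ p, Measurable (fun x => F x p) := fun p => hF.comp (by fun_prop : Measurable fun x => (x, p))
  have hN : Measurable fun p => (∫⁻ x, F x p ^ (2:ℝ) ∂μ) ^ (1/2:ℝ) := by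
    refine Measurable.pow_const ?_ _
    exact Measurable.lintegral_prod_left' (f := fun z : α × β => F z.1 z.2 ^ (2:ℝ)) (hF.pow_const _)
  have key : ∫⁻ x, (∫⁻ p, F x p ∂ν) ^ (2:ℝ) ∂μ ≤
      (∫⁻ p, (∫⁻ x, F x p ^ (2:ℝ) ∂μ) ^ (1/2:ℝ) ∂ν) ^ (2:ℝ) := by
    calc ∫⁻ x, (∫⁻ p, F x p ∂ν) ^ (2:ℝ) ∂μ
        = ∫⁻ x, ∫⁻ p, ∫⁻ q, F x p * F x q ∂ν ∂ν ∂μ := by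
          refine lintegral_congr fun x => ?_
          simp_rw [lintegral_const_mul _ (hFx x)]
          rw [lintegral_mul_const _ (hFx x)]
          rw [show (2:ℝ) = ((2:ℕ):ℝ) by norm_num, ENNReal.rpow_natCast, sq]
      _ = ∫⁻ p, ∫⁻ x, ∫⁻ q, F x p * F x q ∂ν ∂μ ∂ν := by
          rw [lintegral_lintegral_swap]
          refine Measurable.aemeasurable ?_
          refine Measurable.lintegral_prod_right' (f := fun z : (α × β) × β => F z.1.1 z.1.2 * F z.1.1 z.2) ?_
          exact (hF.comp (by fun_prop)).mul (hF.comp (by fun_prop : Measurable fun z : (α × β) × β => (z.1.1, z.2)))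
      _ = ∫⁻ p, ∫⁻ q, ∫⁻ x, F x p * F x q ∂μ ∂ν ∂ν := by
          refine lintegral_congr fun p => ?_
          rw [lintegral_lintegral_swap]
          refine Measurable.aemeasurable ?_
          exact ((hFp p).comp (by fun_prop)).mul (hF.comp (by fun_prop))
      _ ≤ ∫⁻ p, ∫⁻ q, (∫⁻ x, F x p ^ (2:ℝ) ∂μ) ^ (1/2:ℝ) * (∫⁻ x, F x q ^ (2:ℝ) ∂μ) ^ (1/2:ℝ) ∂ν ∂ν := by
          refine lintegral_mono fun p => lintegral_mono fun q => ?_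
          exact ENNReal.lintegral_mul_le_Lp_mul_Lq μ (Real.HolderConjugate.two_two)
            (hFp p).aemeasurable (hFp q).aemeasurable
      _ = _ := by
          simp_rw [lintegral_const_mul _ hN]
          rw [lintegral_mul_const _ hN]
          rw [show (2:ℝ) = ((2:ℕ):ℝ) by norm_num, ENNReal.rpow_natCast, sq]
  calc _ ≤ ((∫⁻ p, (∫⁻ x, F x p ^ (2:ℝ) ∂μ) ^ (1/2:ℝ) ∂ν) ^ (2:ℝ)) ^ (1/2:ℝ) :=
        ENNReal.rpow_le_rpow key (by norm_num)
    _ = _ := by rw [← ENNReal.rpow_mul]; norm_num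

theorem aux_schur {ι : Type*} [MeasurableSpace ι] [MeasurableSingletonClass ι] [Countable ι]
    (s : ℝ≥0∞) (hs : 1 ≤ s)
    (K : ι → ι → ℝ≥0∞) (A : ℝ≥0∞) (hr : ∀ n, ∑' k, K n k ≤ A) (hc : ∀ k, ∑' n, K n k ≤ A)
    (F : ι → ℝ≥0∞) :
    lqNorm (Measure.count : Measure ι) s (fun n => ∑' k, K n k * F k) ≤
      A * lqNorm (Measure.count : Measure ι) s F := by
  unfold lqNorm
  split_ifs with hst
  · rw [essSup_count, essSup_count]
    refine iSup_le fun n => ?_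
    calc ∑' k, K n k * F k ≤ ∑' k, K n k * (⨆ i, F i) := by
          gcongr with k
          exact le_iSup F k
      _ = (∑' k, K n k) * (⨆ i, F i) := ENNReal.tsum_mul_right
      _ ≤ _ := by gcongr; exact hr n
  · rw [lintegral_count, lintegral_count]
    set r := s.toReal with hrdef
    have hr1 : 1 ≤ r := by
      have := ENNReal.toReal_mono hst hs
      simpa using this
    have hr0 : 0 < r := by linarith
    have jensen : ∀ n, (∑' k, K n k * F k) ^ r ≤ A ^ (r - 1) * ∑' k, K n k * F k ^ r := by
      intro n
      rcases eq_or_lt_of_le hr1 with h | h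
      · rw [← h]; simp
      have hpq : (Real.conjExponent r).HolderConjugate r := (Real.HolderConjugate.conjExponent h).symm
      have hq0 : 0 < Real.conjExponent r := hpq.pos
      have := ENNReal.lintegral_mul_le_Lp_mul_Lq (Measure.count : Measure ι) hpq
        (f := fun k => K n k ^ (1 / Real.conjExponent r)) (g := fun k => K n k ^ (1/r) * F k)
        (measurable_of_countable _).aemeasurable (measurable_of_countable _).aemeasurable
      rw [lintegral_count, lintegral_count, lintegral_count] at this
      have e1 : ∀ k, ((fun k => K n k ^ (1 / Real.conjExponent r)) * (fun k => K n k ^ (1/r) * F k)) k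
          = K n k * F k := by
        intro k
        simp only [Pi.mul_apply]
        rw [← mul_assoc, ← ENNReal.rpow_add_of_nonneg _ _ (by positivity) (by positivity)]
        have : 1 / Real.conjExponent r + 1 / r = 1 := by
          simpa using hpq.inv_add_inv_eq_one
        rw [this, ENNReal.rpow_one]
      have e2 : ∀ k, (K n k ^ (1 / Real.conjExponent r)) ^ (Real.conjExponent r) = K n k := by
        intro k
        rw [← ENNReal.rpow_mul, one_div_mul_cancel hq0.ne', ENNReal.rpow_one]
      have e3 : ∀ k, (K n k ^ (1/r) * F k) ^ r = K n k * F k ^ r := by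
        intro k
        rw [ENNReal.mul_rpow_of_nonneg _ _ hr0.le, ← ENNReal.rpow_mul, one_div_mul_cancel hr0.ne', ENNReal.rpow_one]
      simp_rw [e1, e2, e3] at this
      have h3 := ENNReal.rpow_le_rpow this hr0.le
      rw [ENNReal.mul_rpow_of_nonneg _ _ hr0.le, ← ENNReal.rpow_mul, ← ENNReal.rpow_mul,
        one_div_mul_cancel hr0.ne', ENNReal.rpow_one] at h3
      have e4 : 1 / Real.conjExponent r * r = r - 1 := by
        have h5 := hpq.inv_add_inv_eq_one
        have : (Real.conjExponent r)⁻¹ = 1 - r⁻¹ := by linarith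
        rw [one_div, this]
        field_simp
      rw [e4] at h3
      refine h3.trans ?_
      gcongr
      exact hr n
    calc (∑' n, (∑' k, K n k * F k) ^ r) ^ (1 / r)
        ≤ (∑' n, A ^ (r - 1) * ∑' k, K n k * F k ^ r) ^ (1/r) := by
          gcongr with n
          exact jensen n
      _ = (A ^ (r-1) * ∑' k, (∑' n, K n k) * F k ^ r) ^ (1/r) := by
          rw [ENNReal.tsum_mul_left, ENNReal.tsum_comm]
          simp_rw [ENNReal.tsum_mul_right]
      _ ≤ (A ^ (r-1) * ∑' k, A * F k ^ r) ^ (1/r) := by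
          gcongr with k
          exact hc k
      _ = (A ^ r * ∑' k, F k ^ r) ^ (1/r) := by
          rw [ENNReal.tsum_mul_left, ← mul_assoc]
          congr 2
          nth_rewrite 2 [← ENNReal.rpow_one A]
          rw [← ENNReal.rpow_add_of_nonneg _ _ (by linarith) (by norm_num)]
          congr 1; ring
      _ = _ := by
          rw [ENNReal.mul_rpow_of_nonneg _ _ (by positivity), ← ENNReal.rpow_mul, mul_one_div_cancel hr0.ne', ENNReal.rpow_one]

open MeasureTheory SchwartzMap Complex ENNReal NNReal

/-- unimodular exponential -/
noncomputable def eeX (r : ℝ) : ℂ := Complex.exp ((2 * Real.pi * r : ℝ) * Complex.I)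

/-- real Gaussian with parameter -/
noncomputable def grX {V : Type*} [NormedAddCommGroup V] (b : ℝ) (t : V) : ℝ :=
  Real.exp (-b * ‖t‖ ^ 2)

theorem eeX_add (a b : ℝ) : eeX (a + b) = eeX a * eeX b := by
  unfold eeX; rw [← Complex.exp_add]; congr 1; push_cast; ring

theorem eeX_norm (a : ℝ) : ‖eeX a‖ = 1 := by
  unfold eeX; exact Complex.norm_exp_ofReal_mul_I _

theorem eeX_enorm (a : ℝ) : ‖eeX a‖ₑ = 1 := by
  rw [← ofReal_norm, eeX_norm]; simp

@[fun_prop]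
theorem eeX_cont : Continuous eeX := by unfold eeX; fun_prop

@[fun_prop]
theorem grX_cont {V : Type*} [NormedAddCommGroup V] (b : ℝ) :
    Continuous (grX b : V → ℝ) := by unfold grX; fun_prop

theorem grX_pos {V : Type*} [NormedAddCommGroup V] (b : ℝ) (t : V) : 0 < grX b t := Real.exp_pos _

theorem grX_le_one {V : Type*} [NormedAddCommGroup V] {b : ℝ} (hb : 0 ≤ b) (t : V) :
    grX b t ≤ 1 := by
  unfold grX; rw [Real.exp_le_one_iff]
  have : 0 ≤ b * ‖t‖^2 := by positivity
  linarith

theorem grX_sub_comm {V : Type*} [NormedAddCommGroup V] (b : ℝ) (t u : V) :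
    grX b (t - u) = grX b (u - t) := by unfold grX; rw [norm_sub_rev]

set_option linter.unusedSectionVars false

section
variable {V : Type*} [NormedAddCommGroup V] [InnerProductSpace ℝ V]
    [FiniteDimensional ℝ V] [MeasurableSpace V] [BorelSpace V]

theorem grX_integrable {b : ℝ} (hb : 0 < b) : Integrable (grX b : V → ℝ) := by
  have h := GaussianFourier.integrable_cexp_neg_mul_sq_norm_add (V := V) (b := (b:ℂ)) (by simpa using hb) 0 0
  have h2 := h.norm
  refine h2.congr (Filter.Eventually.of_forall fun v => ?_)
  simp only [zero_mul, add_zero]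
  rw [Complex.norm_exp]
  unfold grX
  congr 1
  rw [← Complex.ofReal_neg, ← Complex.ofReal_pow, ← Complex.ofReal_mul, Complex.ofReal_re]

theorem grX_poly (N : ℕ) (v : V) :
    grX Real.pi v * (1 + ‖v‖) ^ N ≤ (N.factorial * Real.exp 2) * grX (Real.pi / 2) v := by
  have h1 := Real.pow_div_factorial_le_exp (1 + ‖v‖) (by positivity) N
  rw [div_le_iff₀ (by positivity)] at h1
  have hp := Real.pi_gt_three
  have h2 : Real.exp (1 + ‖v‖) ≤ Real.exp 2 * Real.exp (Real.pi / 2 * ‖v‖^2) := by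
    rw [← Real.exp_add]
    apply Real.exp_le_exp.2
    nlinarith [sq_nonneg (‖v‖ - 1), sq_nonneg ‖v‖]
  have h3 : grX Real.pi v = grX (Real.pi/2) v * Real.exp (-(Real.pi / 2 * ‖v‖^2)) := by
    unfold grX; rw [← Real.exp_add]; congr 1; ring
  have h4 : Real.exp (-(Real.pi / 2 * ‖v‖^2)) * Real.exp (Real.pi / 2 * ‖v‖^2) = 1 := by
    rw [← Real.exp_add]; simp
  rw [h3]
  have := grX_pos (Real.pi/2) v
  calc _ ≤ grX (Real.pi/2) v * Real.exp (-(Real.pi / 2 * ‖v‖^2)) *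
        ((Real.exp 2 * Real.exp (Real.pi / 2 * ‖v‖^2)) * N.factorial) := by
        gcongr
        exact h1.trans (by gcongr)
    _ = grX (Real.pi/2) v * Real.exp 2 * N.factorial * (Real.exp (-(Real.pi / 2 * ‖v‖^2)) * Real.exp (Real.pi / 2 * ‖v‖^2)) := by ring
    _ = _ := by rw [h4]; ring

theorem grX_decay (h : SchwartzMap V ℂ) (N : ℕ) : ∃ C : ℝ, 0 ≤ C ∧ ∀ u : V,
    ∫ t, ‖h t‖ * grX Real.pi (t - u) ≤ C * ((1 + ‖u‖) ^ N)⁻¹ := by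
  obtain ⟨C1, hC1⟩ : ∃ C1 : ℝ, ∀ t, (1 + ‖t‖) ^ N * ‖h t‖ ≤ C1 := by
    refine ⟨2 ^ N * (Finset.Iic (N, 0)).sup (fun m => SchwartzMap.seminorm ℝ m.1 m.2) h, fun t => ?_⟩
    have := SchwartzMap.one_add_le_sup_seminorm_apply (𝕜 := ℝ) (m := (N, 0)) (k := N) (n := 0) le_rfl le_rfl h t
    simpa only [norm_iteratedFDeriv_zero] using this
  have hC10 : 0 ≤ C1 := le_trans (by positivity) (hC1 0)
  set D : ℝ := N.factorial * Real.exp 2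
  have hD : 0 ≤ D := by positivity
  have hI : Integrable (fun t : V => grX (Real.pi/2) t) := grX_integrable (by positivity)
  refine ⟨C1 * (D * ∫ t : V, grX (Real.pi/2) t), ?_, fun u => ?_⟩
  · have : 0 ≤ ∫ t : V, grX (Real.pi/2) t := integral_nonneg fun t => (grX_pos _ _).le
    positivity
  rw [← div_eq_mul_inv, le_div_iff₀ (by positivity)]
  rw [← integral_mul_const]
  have e : ∫ t : V, grX (Real.pi/2) t = ∫ t : V, grX (Real.pi/2) (t - u) :=
    (integral_sub_right_eq_self (fun t => grX (Real.pi/2) t) u).symm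
  rw [e, ← integral_const_mul, ← integral_const_mul]
  have hI' : Integrable (fun t : V => C1 * (D * grX (Real.pi/2) (t - u))) :=
    ((hI.comp_sub_right u).const_mul _).const_mul _
  refine integral_mono_of_nonneg (Filter.Eventually.of_forall fun t => ?_) hI'
    (Filter.Eventually.of_forall fun t => ?_)
  · have := (grX_pos Real.pi (t-u)).le
    simp only [Pi.zero_apply]; positivity
  · simp only
    have hp := (grX_pos Real.pi (t-u)).le
    have h1 : 1 + ‖u‖ ≤ (1 + ‖t‖) * (1 + ‖t - u‖) := by
      have : ‖u‖ ≤ ‖t‖ + ‖t - u‖ := by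
        calc ‖u‖ = ‖t - (t - u)‖ := by simp
          _ ≤ _ := norm_sub_le _ _
      nlinarith [mul_nonneg (norm_nonneg t) (norm_nonneg (t-u))]
    calc ‖h t‖ * grX Real.pi (t - u) * (1 + ‖u‖) ^ N
        ≤ ‖h t‖ * grX Real.pi (t - u) * ((1 + ‖t‖) * (1 + ‖t - u‖)) ^ N := by gcongr
      _ = ((1 + ‖t‖)^N * ‖h t‖) * (grX Real.pi (t - u) * (1 + ‖t - u‖) ^ N) := by rw [mul_pow]; ring
      _ ≤ _ := by
        exact mul_le_mul (hC1 t) (grX_poly N _) (by positivity) hC10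

end

section
variable {ι : Type*} [Fintype ι]

theorem gaussWin_eq (t : EuclideanSpace ℝ ι) : gaussWin t = (grX Real.pi t : ℂ) := by
  unfold gaussWin grX; push_cast; congr 1; ring

theorem STFT_eq (F : EuclideanSpace ℝ ι → ℂ) (x ω : EuclideanSpace ℝ ι) :
    STFT F x ω = ∫ t, F t * (grX Real.pi (t - x) : ℂ) * eeX (-(inner ℝ ω t)) := by
  unfold STFT
  refine integral_congr_ae (Filter.Eventually.of_forall fun t => ?_)
  simp only [gaussWin_eq, Complex.conj_ofReal]
  congr 1
  unfold eeX; congr 1; push_cast; ring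

theorem STFT_integrand_integrable (h : SchwartzMap (EuclideanSpace ℝ ι) ℂ) (u : EuclideanSpace ℝ ι) :
    Integrable (fun t => h t * (grX Real.pi (t - u) : ℂ)) := by
  refine h.integrable.norm.mono' ?_ (Filter.Eventually.of_forall fun t => ?_)
  · exact (h.continuous.mul (by fun_prop)).aestronglyMeasurable
  · rw [norm_mul, Complex.norm_real, Real.norm_of_nonneg (grX_pos _ _).le]
    exact mul_le_of_le_one_right (norm_nonneg _) (grX_le_one Real.pi_pos.le _)

theorem STFT_continuous (h : SchwartzMap (EuclideanSpace ℝ ι) ℂ) :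
    Continuous (fun p : EuclideanSpace ℝ ι × EuclideanSpace ℝ ι => STFT h p.1 p.2) := by
  simp_rw [STFT_eq]
  refine continuous_of_dominated (bound := fun t => ‖h t‖) (fun p => ?_)
    (fun p => Filter.Eventually.of_forall fun t => ?_) h.integrable.norm
    (Filter.Eventually.of_forall fun t => ?_)
  · exact ((h.continuous.mul (by fun_prop)).mul (by fun_prop)).aestronglyMeasurable
  · rw [norm_mul, norm_mul, Complex.norm_real, Real.norm_of_nonneg (grX_pos _ _).le, eeX_norm, mul_one]
    exact mul_le_of_le_one_right (norm_nonneg _) (grX_le_one Real.pi_pos.le _)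
  · fun_prop

theorem STFT_bound1 (h : SchwartzMap (EuclideanSpace ℝ ι) ℂ) (u ζ : EuclideanSpace ℝ ι) :
    ‖STFT h u ζ‖ ≤ ∫ t, ‖h t‖ * grX Real.pi (t - u) := by
  rw [STFT_eq]
  refine (norm_integral_le_integral_norm _).trans (le_of_eq ?_)
  refine integral_congr_ae (Filter.Eventually.of_forall fun t => ?_)
  simp only
  rw [norm_mul, norm_mul, Complex.norm_real, Real.norm_of_nonneg (grX_pos _ _).le, eeX_norm, mul_one]

open scoped FourierTransform

theorem fourier_eeX {V : Type*} [NormedAddCommGroup V] [InnerProductSpace ℝ V]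
    [FiniteDimensional ℝ V] [MeasurableSpace V] [BorelSpace V] (f : V → ℂ) (w : V) :
    𝓕 f w = ∫ v, eeX (-(inner ℝ v w)) * f v := by
  rw [Real.fourier_eq']
  refine integral_congr_ae (Filter.Eventually.of_forall fun t => ?_)
  simp only [smul_eq_mul]
  congr 1
  unfold eeX; congr 2; push_cast; ring

theorem fourierInv_eeX {V : Type*} [NormedAddCommGroup V] [InnerProductSpace ℝ V]
    [FiniteDimensional ℝ V] [MeasurableSpace V] [BorelSpace V] (f : V → ℂ) (w : V) :
    𝓕⁻ f w = ∫ v, eeX (inner ℝ v w) * f v := by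
  rw [Real.fourierInv_eq']
  refine integral_congr_ae (Filter.Eventually.of_forall fun t => ?_)
  simp only [smul_eq_mul]
  congr 1

/-- Fourier transform of Gaussian with a parameter, in the form needed. -/
theorem gauss_fourier {V : Type*} [NormedAddCommGroup V] [InnerProductSpace ℝ V]
    [FiniteDimensional ℝ V] [MeasurableSpace V] [BorelSpace V] {b : ℝ} (hb : 0 < b) (x : V) :
    ∫ v : V, (grX b v : ℂ) * eeX (inner ℝ x v) =
      ((Real.pi / b) ^ (Module.finrank ℝ V / 2 : ℝ) : ℝ) * (grX (Real.pi ^ 2 / b) x : ℂ) := by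
  have h := fourier_gaussian_innerProductSpace' (V := V) (b := (b:ℂ)) (by simpa using hb) x 0
  rw [fourier_eeX] at h
  convert h using 1
  · refine integral_congr_ae (Filter.Eventually.of_forall fun t => ?_)
    simp only [inner_zero_right, neg_zero]
    unfold grX eeX
    push_cast
    rw [← Complex.exp_add, ← Complex.exp_add]
    congr 1; simp; ring
  · unfold grX
    rw [Complex.ofReal_cpow (by positivity)]
    push_cast
    congr 2
    simp; ring

theorem STFT_bound2 (h : SchwartzMap (EuclideanSpace ℝ ι) ℂ) (u ζ : EuclideanSpace ℝ ι) :
    ‖STFT h u ζ‖ ≤ ∫ t, ‖(𝓕 h) t‖ * grX Real.pi (t - ζ) := by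
  set φ : EuclideanSpace ℝ ι → ℂ := fun η => (grX Real.pi (η - ζ) : ℂ) * eeX (inner ℝ u (η - ζ)) with hφ
  have hφn : ∀ η, ‖φ η‖ = grX Real.pi (η - ζ) := by
    intro η
    rw [hφ, norm_mul, Complex.norm_real, Real.norm_of_nonneg (grX_pos _ _).le, eeX_norm, mul_one]
  have hφi : Integrable φ := by
    refine Integrable.mono' (g := fun η => grX Real.pi (η - ζ))
      ((grX_integrable Real.pi_pos).comp_sub_right ζ) ?_ (Filter.Eventually.of_forall fun t => (hφn t).le)
    refine Continuous.aestronglyMeasurable ?_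
    fun_prop
  have hF : ∀ t, 𝓕 φ t = (grX Real.pi (t - u) : ℂ) * eeX (-(inner ℝ ζ t)) := by
    intro t
    rw [fourier_eeX]
    rw [← integral_add_right_eq_self _ ζ]
    have := gauss_fourier (V := EuclideanSpace ℝ ι) Real.pi_pos (u - t)
    have e : Real.pi ^ 2 / Real.pi = Real.pi := by field_simp
    rw [div_self Real.pi_pos.ne', Real.one_rpow, Complex.ofReal_one, one_mul, grX_sub_comm, e] at this
    rw [← this, ← integral_mul_const]
    refine integral_congr_ae (Filter.Eventually.of_forall fun v => ?_)
    simp only [hφ, add_sub_cancel_right]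
    rw [← mul_assoc, mul_comm (eeX _), mul_assoc, mul_assoc, ← eeX_add, ← eeX_add]
    congr 2
    rw [inner_add_left, inner_sub_left, real_inner_comm v t]; ring
  have h1 := VectorFourier.integral_fourierIntegral_smul_eq_flip (μ := volume) (ν := volume)
        (L := innerₗ (EuclideanSpace ℝ ι)) (f := φ) (g := h) Real.continuous_fourierChar
        (by exact continuous_inner) hφi h.integrable
  rw [flip_innerₗ] at h1
  have h2 : STFT h u ζ = ∫ η, φ η • (𝓕 h) η := by
    refine Eq.trans ?_ h1
    rw [STFT_eq]
    refine integral_congr_ae (Filter.Eventually.of_forall fun t => ?_)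
    simp only [smul_eq_mul]
    rw [mul_assoc, ← hF, mul_comm]; rfl
  rw [h2]
  refine (norm_integral_le_integral_norm _).trans (le_of_eq ?_)
  refine integral_congr_ae (Filter.Eventually.of_forall fun t => ?_)
  simp only [norm_smul, hφn]
  rw [mul_comm]

theorem STFT_decay (h : SchwartzMap (EuclideanSpace ℝ ι) ℂ) (N : ℕ) :
    ∃ C : ℝ, 0 ≤ C ∧ ∀ u ζ : EuclideanSpace ℝ ι,
      ‖STFT h u ζ‖ ≤ C * (((1 + ‖u‖) ^ N)⁻¹ * ((1 + ‖ζ‖) ^ N)⁻¹) := by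
  obtain ⟨C1, hC1, h1⟩ := grX_decay h (2 * N)
  obtain ⟨C2, hC2, h2⟩ := grX_decay (𝓕 h) (2 * N)
  refine ⟨C1 + C2, by positivity, fun u ζ => ?_⟩
  have a := (STFT_bound1 h u ζ).trans (h1 u)
  have b := (STFT_bound2 h u ζ).trans (h2 ζ)
  rw [pow_mul', ← inv_pow] at a b
  set p := ((1 + ‖u‖) ^ N)⁻¹ with hp
  set q := ((1 + ‖ζ‖) ^ N)⁻¹ with hq
  have hp0 : 0 ≤ p := by positivity
  have hq0 : 0 ≤ q := by positivity
  have hC : 0 ≤ C1 + C2 := by positivity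
  refine abs_le_of_sq_le_sq' ?_ (by positivity) |>.2
  have h0 := norm_nonneg (STFT h u ζ)
  have a' : ‖STFT h u ζ‖ ≤ (C1 + C2) * p ^ 2 := a.trans (by gcongr; linarith)
  have b' : ‖STFT h u ζ‖ ≤ (C1 + C2) * q ^ 2 := b.trans (by gcongr; linarith)
  calc ‖STFT h u ζ‖ ^ 2 = ‖STFT h u ζ‖ * ‖STFT h u ζ‖ := sq _
    _ ≤ ((C1 + C2) * p ^ 2) * ((C1 + C2) * q ^ 2) := by gcongr
    _ = _ := by ring

theorem inv_pow_integrable {V : Type*} [NormedAddCommGroup V] [NormedSpace ℝ V]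
    [FiniteDimensional ℝ V] [MeasurableSpace V] [BorelSpace V] (μ : Measure V) [μ.IsAddHaarMeasure]
    (N : ℕ) (hN : Module.finrank ℝ V < N) :
    Integrable (fun u : V => ((1 + ‖u‖) ^ N)⁻¹) μ := by
  have := integrable_one_add_norm (μ := μ) (r := (N:ℝ)) (by exact_mod_cast hN)
  refine this.congr (Filter.Eventually.of_forall fun u => ?_)
  simp only
  rw [Real.rpow_neg (by positivity), Real.rpow_natCast]

theorem STFT_integrable_snd (h : SchwartzMap (EuclideanSpace ℝ ι) ℂ) (u : EuclideanSpace ℝ ι) :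
    Integrable (fun ζ => STFT h u ζ) := by
  obtain ⟨C, hC, hd⟩ := STFT_decay h (Module.finrank ℝ (EuclideanSpace ℝ ι) + 1)
  refine Integrable.mono' (((inv_pow_integrable volume _ (Nat.lt_succ_self _)).const_mul
    (((1 + ‖u‖) ^ (Module.finrank ℝ (EuclideanSpace ℝ ι) + 1))⁻¹)).const_mul C) ?_
    (Filter.Eventually.of_forall fun ζ => hd u ζ)
  exact ((STFT_continuous h).comp (by fun_prop : Continuous fun ζ => (u, ζ))).aestronglyMeasurable

theorem STFT_inversion (h : SchwartzMap (EuclideanSpace ℝ ι) ℂ) (u z : EuclideanSpace ℝ ι) :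
    ∫ ζ, STFT h u ζ * eeX (inner ℝ ζ z) = h z * (grX Real.pi (z - u) : ℂ) := by
  set k : EuclideanSpace ℝ ι → ℂ := fun t => h t * (grX Real.pi (t - u) : ℂ) with hk
  have hF : 𝓕 k = fun ζ => STFT h u ζ := by
    ext ζ
    rw [fourier_eeX, STFT_eq]
    refine integral_congr_ae (Filter.Eventually.of_forall fun t => ?_)
    simp only [hk]
    rw [mul_comm, real_inner_comm]
  have hc : Continuous k := h.continuous.mul (by fun_prop)
  have := congrFun (hc.fourierInv_fourier_eq (STFT_integrand_integrable h u)
    (by rw [hF]; exact STFT_integrable_snd h u)) z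
  rw [hF, fourierInv_eeX] at this
  rw [show h z * (grX Real.pi (z - u) : ℂ) = k z from rfl, ← this]
  refine integral_congr_ae (Filter.Eventually.of_forall fun t => ?_)
  simp only
  rw [mul_comm]
end

section
variable {d : ℕ}
local notation "E₁" => EuclideanSpace ℝ (Fin d)
local notation "E₂" => EuclideanSpace ℝ (Fin d ⊕ Fin d)

@[fun_prop]
theorem pairE_cont : Continuous (fun p : E₁ × E₁ => pairE p.1 p.2) := by
  unfold pairE
  refine (PiLp.continuous_toLp 2 _).comp ?_
  refine continuous_pi fun i => ?_
  rcases i with i | i <;> simp only [Sum.elim_inl, Sum.elim_inr] <;> fun_prop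

theorem pairE_norm_ge (p : E₁ × E₁) : ‖p‖ ≤ ‖pairE p.1 p.2‖ := by
  have h : ‖pairE p.1 p.2‖ ^ 2 = ‖p.1‖ ^ 2 + ‖p.2‖ ^ 2 := by
    rw [EuclideanSpace.norm_sq_eq, EuclideanSpace.norm_sq_eq, EuclideanSpace.norm_sq_eq, Fintype.sum_sum_type]
    rfl
  rw [Prod.norm_def]
  refine max_le ?_ ?_ <;> refine abs_le_of_sq_le_sq' ?_ (norm_nonneg _) |>.2 <;> rw [h] <;>
    nlinarith [sq_nonneg ‖p.1‖, sq_nonneg ‖p.2‖]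

theorem inner_pairE (ζ : E₂) (x ω : E₁) :
    inner ℝ ζ (pairE x ω) = inner ℝ (xpart ζ) x + inner ℝ (wpart ζ) ω := by
  simp only [PiLp.inner_apply, Fintype.sum_sum_type]
  rfl

theorem STFT_pair_cont (h : SchwartzMap E₂ ℂ) :
    Continuous (fun p : (E₁ × E₁) × E₂ => STFT h (pairE p.1.1 p.1.2) p.2) := by
  have hc : Continuous (fun p : (E₁ × E₁) × E₂ => pairE p.1.1 p.1.2) :=
    Continuous.comp (g := fun p : E₁ × E₁ => pairE p.1 p.2) pairE_cont continuous_fst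
  have hc2 : Continuous (fun p : (E₁ × E₁) × E₂ => (pairE p.1.1 p.1.2, p.2)) := hc.prodMk continuous_snd
  have hc3 := (STFT_continuous h).comp hc2
  exact hc3

theorem STFT_int_all (h : SchwartzMap E₂ ℂ) :
    Integrable (fun p : (E₁ × E₁) × E₂ => STFT h (pairE p.1.1 p.1.2) p.2)
      (((volume : Measure E₁).prod (volume : Measure E₁)).prod (volume : Measure E₂)) := by
  obtain ⟨N, hN1, hN2⟩ : ∃ N : ℕ, Module.finrank ℝ (E₁ × E₁) < N ∧ Module.finrank ℝ E₂ < N :=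
    ⟨max (Module.finrank ℝ (E₁ × E₁) + 1) (Module.finrank ℝ E₂ + 1),
      lt_of_lt_of_le (Nat.lt_succ_self _) (le_max_left _ _),
      lt_of_lt_of_le (Nat.lt_succ_self _) (le_max_right _ _)⟩
  obtain ⟨C, hC, hd⟩ := STFT_decay h N
  have i1 := inv_pow_integrable ((volume : Measure E₁).prod (volume : Measure E₁)) N hN1
  have i2 := inv_pow_integrable (volume : Measure E₂) N hN2
  refine Integrable.mono' ((i1.mul_prod i2).const_mul C) ?_
    (Filter.Eventually.of_forall fun p => (hd _ _).trans ?_)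
  · exact (STFT_pair_cont h).aestronglyMeasurable
  · have := pairE_norm_ge p.1
    gcongr
end

open MeasureTheory SchwartzMap Complex ENNReal NNReal

section
variable {d : ℕ}
local notation "E₁" => EuclideanSpace ℝ (Fin d)
local notation "E₂" => EuclideanSpace ℝ (Fin d ⊕ Fin d)
open scoped FourierTransform

@[fun_prop]
theorem xpart_cont : Continuous (xpart : E₂ → E₁) := by
  unfold xpart
  exact (PiLp.continuous_toLp 2 _).comp (by fun_prop)

@[fun_prop]
theorem wpart_cont : Continuous (wpart : E₂ → E₁) := by
  unfold wpart
  exact (PiLp.continuous_toLp 2 _).comp (by fun_prop)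

/-- V with paired space variable -/
noncomputable def vX (σ : E₂ → ℂ) (p : (E₁ × E₁) × E₂) : ℂ := STFT σ (pairE p.1.1 p.1.2) p.2

/-- windowed function -/
noncomputable def gX (f : E₁ → ℂ) (u : E₁) (ζ : E₂) (y : E₁) : ℂ :=
  eeX (2⁻¹ * inner ℝ (xpart ζ) y) * (grX Real.pi (y - (2⁻¹ : ℝ) • wpart ζ - u) : ℂ) * f y

/-- multiplied Fourier transform -/
noncomputable def hX (σ : E₂ → ℂ) (f : E₁ → ℂ) (u : E₁) (ζ : E₂) (v : E₁) : ℂ :=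
  vX σ ((u, v), ζ) * 𝓕 (gX f u ζ) v

/-- the parameter measure -/
noncomputable def rhoX (d : ℕ) : Measure ((EuclideanSpace ℝ (Fin d) × EuclideanSpace ℝ (Fin d)) ×
    EuclideanSpace ℝ (Fin d ⊕ Fin d)) := ((volume.prod volume).prod volume)

instance : SFinite (rhoX d) := by unfold rhoX; infer_instance

theorem vX_cont (σ : SchwartzMap E₂ ℂ) : Continuous (vX σ) := STFT_pair_cont σ

theorem vX_int (σ : SchwartzMap E₂ ℂ) : Integrable (vX σ) (rhoX d) := STFT_int_all σ

/-- five-variable integrand -/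
noncomputable def iX (σ : E₂ → ℂ) (f : E₁ → ℂ) (x y ω : E₁) (p : (E₁ × E₁) × E₂) : ℂ :=
  eeX (inner ℝ (x - y) ω) * f y * (grX (2 * Real.pi) ((2⁻¹ : ℝ) • (x + y) - p.1.1) : ℂ) *
    (grX (2 * Real.pi) (ω - p.1.2) : ℂ) * vX σ p *
    eeX (inner ℝ (xpart p.2) ((2⁻¹ : ℝ) • (x + y)) + inner ℝ (wpart p.2) ω)

theorem iX_norm_le (σ : E₂ → ℂ) (f : E₁ → ℂ) (x y ω : E₁) (p : (E₁ × E₁) × E₂) :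
    ‖iX σ f x y ω p‖ ≤ ‖f y‖ * (grX (2 * Real.pi) (ω - p.1.2) * ‖vX σ p‖) := by
  unfold iX
  simp only [norm_mul, eeX_norm, Complex.norm_real, one_mul, mul_one]
  rw [Real.norm_of_nonneg (grX_pos _ _).le, Real.norm_of_nonneg (grX_pos _ _).le]
  have h1 := grX_le_one (b := 2 * Real.pi) (by positivity) ((2⁻¹ : ℝ) • (x + y) - p.1.1)
  have h2 := (grX_pos (2 * Real.pi) (ω - p.1.2)).le
  calc _ = (‖f y‖ * (grX (2 * Real.pi) (ω - p.1.2) * ‖vX σ p‖)) * grX (2 * Real.pi) ((2⁻¹ : ℝ) • (x + y) - p.1.1) := by ring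
    _ ≤ _ := mul_le_of_le_one_right (by positivity) h1

theorem iX_int_p (σ : SchwartzMap E₂ ℂ) (f : E₁ → ℂ) (x y ω : E₁) :
    Integrable (iX σ f x y ω) (rhoX d) := by
  refine Integrable.mono' ((vX_int σ).norm.const_mul ‖f y‖) ?_ (Filter.Eventually.of_forall fun p => ?_)
  · have := vX_cont σ
    unfold iX
    refine Continuous.aestronglyMeasurable ?_
    fun_prop
  · refine (iX_norm_le _ _ _ _ _ _).trans ?_
    gcongr
    exact mul_le_of_le_one_left (norm_nonneg _) (grX_le_one (by positivity) _)

theorem iX_int_wp (σ : SchwartzMap E₂ ℂ) (f : E₁ → ℂ) (x y : E₁) :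
    Integrable (fun q : E₁ × ((E₁ × E₁) × E₂) => iX σ f x y q.1 q.2) (volume.prod (rhoX d)) := by
  have hv := vX_cont σ
  have hb : 0 < 2 * Real.pi := by positivity
  have key : Integrable (fun q : E₁ × ((E₁ × E₁) × E₂) =>
      grX (2 * Real.pi) (q.1 - q.2.1.2) * ‖vX σ q.2‖) (volume.prod (rhoX d)) := by
    refine (integrable_prod_iff' ?_).2 ⟨Filter.Eventually.of_forall fun p => ?_, ?_⟩
    · refine Continuous.aestronglyMeasurable ?_
      fun_prop
    · exact Integrable.mul_const ((grX_integrable hb).comp_sub_right p.1.2) ‖vX σ p‖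
    · have : ∀ p : ((E₁ × E₁) × E₂), ∫ ω, ‖grX (2 * Real.pi) (ω - p.1.2) * ‖vX σ p‖‖
          = (∫ ω : E₁, grX (2 * Real.pi) ω) * ‖vX σ p‖ := by
        intro p
        rw [← integral_sub_right_eq_self (fun ω => grX (2 * Real.pi) ω) p.1.2, ← integral_mul_const]
        refine integral_congr_ae (Filter.Eventually.of_forall fun ω => ?_)
        simp only
        rw [Real.norm_of_nonneg]
        have := (grX_pos (2 * Real.pi) (ω - p.1.2)).le
        positivity
      simp only [this]
      exact (vX_int σ).norm.const_mul _
  refine Integrable.mono' (key.const_mul ‖f y‖) ?_ (Filter.Eventually.of_forall fun q => iX_norm_le _ _ _ _ _ _)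
  unfold iX
  refine Continuous.aestronglyMeasurable ?_
  fun_prop

theorem grX_pair (b : ℝ) (m ω u v : E₁) :
    grX b (pairE m ω - pairE u v) = grX b (m - u) * grX b (ω - v) := by
  have h : ‖pairE m ω - pairE u v‖ ^ 2 = ‖m - u‖ ^ 2 + ‖ω - v‖ ^ 2 := by
    rw [EuclideanSpace.norm_sq_eq, EuclideanSpace.norm_sq_eq, EuclideanSpace.norm_sq_eq, Fintype.sum_sum_type]
    rfl
  unfold grX
  rw [h, ← Real.exp_add]; congr 1; ring

theorem iX_stepA (σ : SchwartzMap E₂ ℂ) (f : E₁ → ℂ) (x y ω : E₁) :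
    ∫ p, iX σ f x y ω p ∂(rhoX d) = (((∫ v : E₁, grX (3 * Real.pi) v) ^ 2 : ℝ) : ℂ) *
      (eeX (inner ℝ (x - y) ω) * σ (pairE ((2 : ℝ)⁻¹ • (x + y)) ω) * f y) := by
  have hint := iX_int_p σ f x y ω
  unfold rhoX at hint ⊢
  rw [integral_prod _ hint]
  set m := (2 : ℝ)⁻¹ • (x + y) with hm
  have e1 : ∀ u : E₁ × E₁, ∫ ζ, iX σ f x y ω (u, ζ) =
      (eeX (inner ℝ (x - y) ω) * σ (pairE m ω) * f y) *
       ((grX (3 * Real.pi) (m - u.1) : ℂ) * (grX (3 * Real.pi) (ω - u.2) : ℂ)) := by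
    intro u
    have h1 := STFT_inversion σ (pairE u.1 u.2) (pairE m ω)
    have h2 : ∀ ζ, iX σ f x y ω (u, ζ) = (eeX (inner ℝ (x - y) ω) * f y *
        (grX (2 * Real.pi) (m - u.1) : ℂ) * (grX (2 * Real.pi) (ω - u.2) : ℂ)) *
        (STFT σ (pairE u.1 u.2) ζ * eeX (inner ℝ ζ (pairE m ω))) := by
      intro ζ
      unfold iX vX
      rw [inner_pairE]; ring
    simp_rw [h2]
    rw [integral_const_mul, h1, grX_pair]
    have h3 : ∀ v : E₁, grX (3 * Real.pi) v = grX (2 * Real.pi) v * grX Real.pi v := by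
      intro v; unfold grX; rw [← Real.exp_add]; congr 1; ring
    rw [h3, h3]; push_cast; ring
  simp_rw [e1]
  rw [integral_const_mul]
  rw [integral_prod_mul (fun u => (grX (3 * Real.pi) (m - u) : ℂ)) (fun v => (grX (3 * Real.pi) (ω - v) : ℂ))]
  have e2 : ∀ m : E₁, ∫ u : E₁, (grX (3 * Real.pi) (m - u) : ℂ) = ((∫ v : E₁, grX (3 * Real.pi) v : ℝ) : ℂ) := by
    intro m
    rw [← integral_sub_left_eq_self (fun v => grX (3 * Real.pi) v) volume m]
    exact integral_ofReal
  rw [e2, e2]; push_cast; ring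

/-- four-variable integrand after the frequency integration -/
noncomputable def jX (σ : E₂ → ℂ) (f : E₁ → ℂ) (x y : E₁) (p : (E₁ × E₁) × E₂) : ℂ :=
  (vX σ p * eeX (2⁻¹ * inner ℝ (xpart p.2) x) * eeX (inner ℝ p.1.2 (x + wpart p.2)) *
    (grX Real.pi (x + (2⁻¹ : ℝ) • wpart p.2 - p.1.1) : ℂ)) *
    (eeX (-(inner ℝ y p.1.2)) * gX f p.1.1 p.2 y)

theorem grX_ident (x y z u : E₁) :
    grX (2 * Real.pi) ((2⁻¹ : ℝ) • (x + y) - u) * grX (Real.pi / 2) (x - y + z) =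
    grX Real.pi (x + (2⁻¹ : ℝ) • z - u) * grX Real.pi (y - (2⁻¹ : ℝ) • z - u) := by
  set a := x + (2⁻¹ : ℝ) • z - u with ha
  set b := y - (2⁻¹ : ℝ) • z - u with hb
  have h1 : (2⁻¹ : ℝ) • (x + y) - u = (2⁻¹ : ℝ) • (a + b) := by
    rw [ha, hb]; module
  have h2 : x - y + z = a - b := by
    rw [ha, hb]; module
  have h3 := parallelogram_law_with_norm ℝ a b
  unfold grX
  rw [h1, h2, ← Real.exp_add, ← Real.exp_add, norm_smul]
  congr 1
  rw [mul_pow]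
  norm_num
  linear_combination (-Real.pi/2) * h3

theorem iX_stepB (σ : E₂ → ℂ) (f : E₁ → ℂ) (x y : E₁) (p : (E₁ × E₁) × E₂) :
    ∫ ω, iX σ f x y ω p =
      (((Real.pi / (2 * Real.pi)) ^ (Module.finrank ℝ E₁ / 2 : ℝ) : ℝ) : ℂ) * jX σ f x y p := by
  set w := x - y + wpart p.2 with hw
  set m := (2 : ℝ)⁻¹ • (x + y) with hm
  have hg := gauss_fourier (V := E₁) (b := 2 * Real.pi) (by positivity) w
  have e1 : ∀ ω, iX σ f x y ω p = (f y * (grX (2 * Real.pi) (m - p.1.1) : ℂ) * vX σ p *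
      eeX (inner ℝ (xpart p.2) m)) * ((grX (2 * Real.pi) (ω - p.1.2) : ℂ) * eeX (inner ℝ w ω)) := by
    intro ω
    unfold iX
    rw [hw, eeX_add, inner_add_left, eeX_add]; ring
  simp_rw [e1]
  rw [integral_const_mul]
  have e2 : ∫ ω, ((grX (2 * Real.pi) (ω - p.1.2) : ℂ) * eeX (inner ℝ w ω)) =
      eeX (inner ℝ w p.1.2) * ∫ ω, ((grX (2 * Real.pi) ω : ℂ) * eeX (inner ℝ w ω)) := by
    rw [← integral_add_right_eq_self _ p.1.2, ← integral_const_mul]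
    refine integral_congr_ae (Filter.Eventually.of_forall fun ω => ?_)
    simp only [add_sub_cancel_right]
    rw [inner_add_right, eeX_add]; ring
  rw [e2, hg]
  have e3 : Real.pi ^ 2 / (2 * Real.pi) = Real.pi / 2 := by field_simp
  rw [e3]
  have e4 := grX_ident x y (wpart p.2) p.1.1
  have e4' : (grX (2 * Real.pi) (m - p.1.1) : ℂ) * (grX (Real.pi / 2) w : ℂ) =
    (grX Real.pi (x + (2⁻¹ : ℝ) • wpart p.2 - p.1.1) : ℂ) * (grX Real.pi (y - (2⁻¹ : ℝ) • wpart p.2 - p.1.1) : ℂ) := by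
    exact_mod_cast e4
  have e5 : eeX (inner ℝ (xpart p.2) m) * eeX (inner ℝ w p.1.2) =
      eeX (2⁻¹ * inner ℝ (xpart p.2) x) * eeX (inner ℝ p.1.2 (x + wpart p.2)) *
      eeX (-(inner ℝ y p.1.2)) * eeX (2⁻¹ * inner ℝ (xpart p.2) y) := by
    rw [← eeX_add, ← eeX_add, ← eeX_add, ← eeX_add]
    congr 1
    rw [hm, hw, inner_smul_right, inner_add_right, inner_add_left, inner_sub_left, inner_add_right,
      real_inner_comm x p.1.2, real_inner_comm (wpart p.2) p.1.2]
    ring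
  unfold jX gX
  linear_combination (f y * vX σ p * (((Real.pi / (2 * Real.pi)) ^ (Module.finrank ℝ E₁ / 2 : ℝ) : ℝ) : ℂ)) *
    (eeX (inner ℝ (xpart p.2) m) * eeX (inner ℝ w p.1.2) * e4' +
    (grX Real.pi (x + (2⁻¹ : ℝ) • wpart p.2 - p.1.1) : ℂ) * (grX Real.pi (y - (2⁻¹ : ℝ) • wpart p.2 - p.1.1) : ℂ) * e5)

theorem jX_int (σ : SchwartzMap E₂ ℂ) (f : SchwartzMap E₁ ℂ) (x : E₁) :
    Integrable (fun q : E₁ × ((E₁ × E₁) × E₂) => jX σ f x q.1 q.2) (volume.prod (rhoX d)) := by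
  have hv := vX_cont σ
  have hf := f.continuous
  refine Integrable.mono' (f.integrable.norm.mul_prod (vX_int σ).norm) ?_ (Filter.Eventually.of_forall fun q => ?_)
  · unfold jX gX
    refine Continuous.aestronglyMeasurable ?_
    fun_prop
  · unfold jX gX
    simp only [norm_mul, eeX_norm, Complex.norm_real, one_mul, mul_one]
    rw [Real.norm_of_nonneg (grX_pos _ _).le, Real.norm_of_nonneg (grX_pos _ _).le]
    have h1 := grX_le_one Real.pi_pos.le (x + (2⁻¹ : ℝ) • wpart q.2.2 - q.2.1.1)
    have h2 := grX_le_one Real.pi_pos.le (q.1 - (2⁻¹ : ℝ) • wpart q.2.2 - q.2.1.1)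
    have h3 := (grX_pos Real.pi (x + (2⁻¹ : ℝ) • wpart q.2.2 - q.2.1.1)).le
    have h4 := (grX_pos Real.pi (q.1 - (2⁻¹ : ℝ) • wpart q.2.2 - q.2.1.1)).le
    calc _ ≤ (‖vX σ q.2‖ * 1) * (1 * ‖f q.1‖) := by gcongr
      _ = _ := by ring

theorem weyl_repr (σ : SchwartzMap E₂ ℂ) (f : SchwartzMap E₁ ℂ) (x : E₁) :
    (((∫ v : E₁, grX (3 * Real.pi) v) ^ 2 : ℝ) : ℂ) * weylOp σ f x =
      (((Real.pi / (2 * Real.pi)) ^ (Module.finrank ℝ E₁ / 2 : ℝ) : ℝ) : ℂ) *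
        ∫ p, (∫ y, jX σ f x y p) ∂(rhoX d) := by
  have h0 : weylOp σ f x = ∫ y, ∫ ω, eeX (inner ℝ (x - y) ω) * σ (pairE ((2 : ℝ)⁻¹ • (x + y)) ω) * f y := by
    unfold weylOp
    refine integral_congr_ae (Filter.Eventually.of_forall fun y => ?_)
    refine integral_congr_ae (Filter.Eventually.of_forall fun ω => ?_)
    simp only
    congr 2
    unfold eeX; congr 1; push_cast; ring
  rw [h0, ← integral_const_mul]
  simp_rw [← integral_const_mul]
  simp_rw [← iX_stepA]
  have h1 : ∀ y, ∫ ω, ∫ p, iX σ f x y ω p ∂(rhoX d) = (((Real.pi / (2 * Real.pi)) ^ (Module.finrank ℝ E₁ / 2 : ℝ) : ℝ) : ℂ) *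
      ∫ p, jX σ f x y p ∂(rhoX d) := by
    intro y
    rw [integral_integral_swap (iX_int_wp σ f x y)]
    simp_rw [iX_stepB]
    rw [integral_const_mul]
  simp_rw [h1]
  rw [integral_const_mul, integral_integral_swap (jX_int σ f x)]
  simp_rw [integral_const_mul]

theorem jX_inner (σ : SchwartzMap E₂ ℂ) (f : SchwartzMap E₁ ℂ) (x : E₁) (p : (E₁ × E₁) × E₂) :
    ∫ y, jX σ f x y p = (eeX (2⁻¹ * inner ℝ (xpart p.2) x) *
      (grX Real.pi (x + (2⁻¹ : ℝ) • wpart p.2 - p.1.1) : ℂ)) *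
      (eeX (inner ℝ p.1.2 (x + wpart p.2)) * hX σ f p.1.1 p.2 p.1.2) := by
  unfold jX hX
  rw [integral_const_mul, ← fourier_eeX]
  ring

theorem weyl_bound (σ : SchwartzMap E₂ ℂ) (f : SchwartzMap E₁ ℂ) (x : E₁) :
    ENNReal.ofReal ((∫ v : E₁, grX (3 * Real.pi) v) ^ 2) * ‖weylOp σ f x‖ₑ ≤
      ENNReal.ofReal ((Real.pi / (2 * Real.pi)) ^ (Module.finrank ℝ E₁ / 2 : ℝ)) *
      ∫⁻ ζ, ∫⁻ u, ENNReal.ofReal (grX Real.pi (x + (2⁻¹ : ℝ) • wpart ζ - u)) *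
        ‖𝓕⁻ (hX σ f u ζ) (x + wpart ζ)‖ₑ := by
  have h1 := congrArg (fun z => ‖z‖ₑ) (weyl_repr σ f x)
  simp only [enorm_mul] at h1
  have h2 : ∀ r : ℝ, 0 ≤ r → ‖(r : ℂ)‖ₑ = ENNReal.ofReal r := by
    intro r hr
    rw [← ofReal_norm, Complex.norm_real, Real.norm_of_nonneg hr]
  rw [h2 _ (by positivity), h2 _ (by positivity)] at h1
  rw [h1]
  gcongr
  have hint : Integrable (fun p => ∫ y, jX σ f x y p) (rhoX d) := (jX_int σ f x).integral_prod_right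
  unfold rhoX at hint ⊢
  rw [integral_prod_symm _ hint]
  refine (enorm_integral_le_lintegral_enorm _).trans ?_
  refine lintegral_mono_ae ?_
  filter_upwards [hint.prod_left_ae] with ζ hζ
  rw [integral_prod _ hζ]
  refine (enorm_integral_le_lintegral_enorm _).trans ?_
  refine lintegral_mono fun u => ?_
  simp_rw [jX_inner]
  rw [integral_const_mul, ← fourierInv_eeX, enorm_mul, enorm_mul, eeX_enorm, one_mul, h2 _ (grX_pos _ _).le]
end

open MeasureTheory SchwartzMap Complex ENNReal NNReal

section
variable {d : ℕ}
local notation "E₁" => EuclideanSpace ℝ (Fin d)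
local notation "E₂" => EuclideanSpace ℝ (Fin d ⊕ Fin d)
open scoped FourierTransform

/-- sup of the STFT in the space variable -/
noncomputable def nX (σ : E₂ → ℂ) (ζ : E₂) : ℝ≥0∞ := ⨆ u, ‖STFT σ u ζ‖ₑ

theorem nX_meas (σ : SchwartzMap E₂ ℂ) : Measurable (nX σ) := by
  refine LowerSemicontinuous.measurable ?_
  refine lowerSemicontinuous_iSup fun u => Continuous.lowerSemicontinuous ?_
  exact ((STFT_continuous σ).comp (by fun_prop : Continuous fun ζ => (u, ζ))).enorm

theorem nX_int_le (σ : SchwartzMap E₂ ℂ) : ∫⁻ ζ, nX σ ζ ≤ modNorm ∞ 1 σ := by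
  unfold modNorm
  have h1 : ∀ g : E₂ → ℝ≥0∞, lqNorm volume 1 g = ∫⁻ ζ, g ζ := by
    intro g; unfold lqNorm; simp
  rw [h1]
  refine lintegral_mono fun ζ => ?_
  unfold lqNorm
  rw [if_pos rfl]
  refine iSup_le fun u => ?_
  have hc : Continuous fun u => ‖STFT σ u ζ‖ₑ :=
    ((STFT_continuous σ).comp (by fun_prop : Continuous fun u => (u, ζ))).enorm
  have hae := _root_.ae_le_essSup (μ := (volume : Measure E₂)) (f := fun u => ‖STFT σ u ζ‖ₑ)
  have hd := Measure.dense_of_ae hae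
  have hcl : IsClosed {u | ‖STFT σ u ζ‖ₑ ≤ essSup (fun u => ‖STFT σ u ζ‖ₑ) volume} :=
    isClosed_le hc continuous_const
  have : u ∈ {u | ‖STFT σ u ζ‖ₑ ≤ essSup (fun u => ‖STFT σ u ζ‖ₑ) volume} := by
    have := hd u
    rwa [hcl.closure_eq] at this
  exact this

theorem vX_le (σ : E₂ → ℂ) (u v : E₁) (ζ : E₂) : ‖vX σ ((u, v), ζ)‖ₑ ≤ nX σ ζ := by
  unfold vX nX
  exact le_iSup (fun z => ‖STFT σ z ζ‖ₑ) (pairE u v)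

theorem gX_norm (f : E₁ → ℂ) (u : E₁) (ζ : E₂) (y : E₁) :
    ‖gX f u ζ y‖ = grX Real.pi (y - (2⁻¹ : ℝ) • wpart ζ - u) * ‖f y‖ := by
  unfold gX
  rw [norm_mul, norm_mul, eeX_norm, Complex.norm_real, Real.norm_of_nonneg (grX_pos _ _).le, one_mul]

theorem gX_enorm (f : E₁ → ℂ) (u : E₁) (ζ : E₂) (y : E₁) :
    ‖gX f u ζ y‖ₑ = ENNReal.ofReal (grX Real.pi (y - (2⁻¹ : ℝ) • wpart ζ - u)) * ‖f y‖ₑ := by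
  rw [← ofReal_norm, gX_norm, ENNReal.ofReal_mul (grX_pos _ _).le, ofReal_norm]

theorem gX_int (f : SchwartzMap E₁ ℂ) (u : E₁) (ζ : E₂) : Integrable (gX f u ζ) := by
  have hf := f.continuous
  refine f.integrable.norm.mono' ?_ (Filter.Eventually.of_forall fun y => ?_)
  · unfold gX
    refine Continuous.aestronglyMeasurable ?_
    fun_prop
  · rw [gX_norm]
    exact mul_le_of_le_one_left (norm_nonneg _) (grX_le_one Real.pi_pos.le _)

theorem vX_int_v (σ : SchwartzMap E₂ ℂ) (u : E₁) (ζ : E₂) :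
    Integrable (fun v => vX σ ((u, v), ζ)) := by
  obtain ⟨C, hC, hd⟩ := STFT_decay σ (Module.finrank ℝ E₁ + 1)
  refine Integrable.mono' ((inv_pow_integrable (volume : Measure E₁) _ (Nat.lt_succ_self _)).const_mul C) ?_
    (Filter.Eventually.of_forall fun v => ?_)
  · exact ((vX_cont σ).comp (by fun_prop : Continuous fun v : E₁ => ((u, v), ζ))).aestronglyMeasurable
  · refine (hd _ _).trans ?_
    gcongr
    rw [← mul_one ((((1 + ‖v‖) ^ (Module.finrank ℝ E₁ + 1)))⁻¹)]
    have h1 : ‖v‖ ≤ ‖pairE u v‖ := le_trans (norm_snd_le (u, v)) (pairE_norm_ge (u, v))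
    gcongr
    refine inv_le_one_of_one_le₀ (one_le_pow₀ ?_)
    linarith [norm_nonneg ζ]

theorem fgX_cont (f : SchwartzMap E₁ ℂ) :
    Continuous (fun q : (E₁ × E₂) × E₁ => 𝓕 (gX f q.1.1 q.1.2) q.2) := by
  have hf := f.continuous
  simp_rw [fourier_eeX]
  refine continuous_of_dominated (bound := fun t => ‖f t‖) (fun p => ?_)
    (fun p => Filter.Eventually.of_forall fun t => ?_) f.integrable.norm
    (Filter.Eventually.of_forall fun t => ?_)
  · unfold gX
    refine Continuous.aestronglyMeasurable ?_
    fun_prop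
  · rw [norm_mul, eeX_norm, one_mul, gX_norm]
    exact mul_le_of_le_one_left (norm_nonneg _) (grX_le_one Real.pi_pos.le _)
  · unfold gX
    fun_prop

theorem fgX_bdd (f : SchwartzMap E₁ ℂ) (u : E₁) (ζ : E₂) (v : E₁) :
    ‖𝓕 (gX f u ζ) v‖ ≤ ∫ y, ‖f y‖ := by
  rw [fourier_eeX]
  refine (norm_integral_le_integral_norm _).trans ?_
  refine integral_mono_of_nonneg (Filter.Eventually.of_forall fun y => norm_nonneg _) f.integrable.norm
    (Filter.Eventually.of_forall fun t => ?_)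
  simp only
  rw [norm_mul, eeX_norm, one_mul, gX_norm]
  exact mul_le_of_le_one_left (norm_nonneg _) (grX_le_one Real.pi_pos.le _)

theorem hX_int (σ : SchwartzMap E₂ ℂ) (f : SchwartzMap E₁ ℂ) (u : E₁) (ζ : E₂) :
    Integrable (hX σ f u ζ) := by
  unfold hX
  refine Integrable.mul_bdd (c := ∫ y, ‖f y‖) (vX_int_v σ u ζ) ?_ (Filter.Eventually.of_forall fun v => fgX_bdd f u ζ v)
  exact ((fgX_cont f).comp (by fun_prop : Continuous fun v : E₁ => ((u, ζ), v))).aestronglyMeasurable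

theorem hX_L2 (σ : SchwartzMap E₂ ℂ) (f : SchwartzMap E₁ ℂ) (u : E₁) (ζ : E₂) (w : E₁) :
    ∫⁻ x, ‖𝓕⁻ (hX σ f u ζ) (x + w)‖ₑ ^ (2:ℝ) ≤
      nX σ ζ ^ (2:ℝ) * ∫⁻ y, ‖gX f u ζ y‖ₑ ^ (2:ℝ) := by
  rw [lintegral_add_right_eq_self (fun x => ‖𝓕⁻ (hX σ f u ζ) x‖ₑ ^ (2:ℝ)) w]
  simp_rw [Real.fourierInv_eq_fourier_neg]
  rw [lintegral_neg_eq_self (fun x => ‖𝓕 (hX σ f u ζ) x‖ₑ ^ (2:ℝ))]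
  refine (aux_plancherel _ (hX_int σ f u ζ)).trans ?_
  calc _ ≤ ∫⁻ v, nX σ ζ ^ (2:ℝ) * ‖𝓕 (gX f u ζ) v‖ₑ ^ (2:ℝ) := by
        refine lintegral_mono fun v => ?_
        unfold hX
        rw [enorm_mul, ENNReal.mul_rpow_of_nonneg _ _ (by norm_num)]
        gcongr
        exact vX_le _ _ _ _
    _ = nX σ ζ ^ (2:ℝ) * ∫⁻ v, ‖𝓕 (gX f u ζ) v‖ₑ ^ (2:ℝ) := by
        refine lintegral_const_mul _ ?_
        exact ((((fgX_cont f).comp (by fun_prop : Continuous fun v : E₁ => ((u, ζ), v)))).enorm.measurable).pow_const _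
    _ ≤ _ := by
        exact mul_le_mul_right (aux_plancherel _ (gX_int f u ζ)) _

theorem hX_cont (σ : SchwartzMap E₂ ℂ) (f : SchwartzMap E₁ ℂ) :
    Continuous (fun q : (E₁ × E₂) × E₁ => hX σ f q.1.1 q.1.2 q.2) := by
  unfold hX
  refine Continuous.mul ?_ (fgX_cont f)
  have h : Continuous fun q : (E₁ × E₂) × E₁ => ((q.1.1, q.2), q.1.2) := by fun_prop
  exact (vX_cont σ).comp h

theorem hX_cont2 (σ : SchwartzMap E₂ ℂ) (f : SchwartzMap E₁ ℂ) :
    Continuous (fun q : ((E₁ × E₂) × E₁) × E₁ =>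
        eeX (inner ℝ q.2 q.1.2) * hX σ f q.1.1.1 q.1.1.2 q.2) := by
  have h0 : Continuous fun q : ((E₁ × E₂) × E₁) × E₁ => eeX (inner ℝ q.2 q.1.2) := by fun_prop
  have h : Continuous fun q : ((E₁ × E₂) × E₁) × E₁ => (q.1.1, q.2) :=
    (continuous_fst.comp continuous_fst).prodMk continuous_snd
  have h1 := Continuous.comp (hX_cont σ f) h
  have h2 := h0.mul h1
  exact h2

theorem hX_meas1 (σ : SchwartzMap E₂ ℂ) (f : SchwartzMap E₁ ℂ) :
    Measurable (fun q : (E₁ × E₂) × E₁ => 𝓕⁻ (hX σ f q.1.1 q.1.2) q.2) := by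
  simp_rw [fourierInv_eeX]
  exact (hX_cont2 σ f).stronglyMeasurable.integral_prod_right.measurable

theorem hX_meas (σ : SchwartzMap E₂ ℂ) (f : SchwartzMap E₁ ℂ) (n : E₁) :
    Measurable (Function.uncurry fun (x : E₁) (p : E₂ × E₁) =>
      ENNReal.ofReal (grX Real.pi (x + n + (2⁻¹ : ℝ) • wpart p.1 - p.2)) *
        ‖𝓕⁻ (hX σ f p.2 p.1) (x + n + wpart p.1)‖ₑ) := by
  have h1 : Measurable fun q : E₁ × (E₂ × E₁) =>
      ENNReal.ofReal (grX Real.pi (q.1 + n + (2⁻¹ : ℝ) • wpart q.2.1 - q.2.2)) :=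
    ENNReal.measurable_ofReal.comp (Continuous.measurable (by fun_prop))
  have h2 : Continuous fun q : E₁ × (E₂ × E₁) => ((q.2.2, q.2.1), q.1 + n + wpart q.2.1) := by
    fun_prop
  have h3 := ((hX_meas1 σ f).comp h2.measurable).enorm
  exact h1.mul h3
end

open MeasureTheory SchwartzMap Complex ENNReal NNReal

section
variable {d : ℕ}
local notation "E₁" => EuclideanSpace ℝ (Fin d)
local notation "E₂" => EuclideanSpace ℝ (Fin d ⊕ Fin d)

/-- integer points -/
noncomputable def tX (n : Fin d → ℤ) : E₁ := WithLp.toLp 2 fun i => (n i : ℝ)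

theorem unitCube_eq : unitCube d = (fun x : E₁ => WithLp.ofLp x) ⁻¹' (Set.univ.pi fun _ => Set.Ico (0:ℝ) 1) := by
  ext x; simp [unitCube]

theorem unitCube_meas : MeasurableSet (unitCube d) := by
  rw [unitCube_eq]
  refine (PiLp.continuous_ofLp 2 _).measurable ?_
  exact MeasurableSet.univ_pi fun _ => measurableSet_Ico

theorem unitCube_vol : volume (unitCube d) = 1 := by
  rw [unitCube_eq]
  have h := (EuclideanSpace.volume_preserving_symm_measurableEquiv_toLp (Fin d)).measure_preimage
    (s := Set.univ.pi fun _ => Set.Ico (0:ℝ) 1)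
    (MeasurableSet.univ_pi fun _ => measurableSet_Ico).nullMeasurableSet
  refine Eq.trans h ?_
  rw [Real.volume_pi_Ico]; simp

theorem cube_tsum (h : E₁ → ℝ≥0∞) (hh : Measurable h) :
    ∑' n : Fin d → ℤ, ∫⁻ x in unitCube d, h (x + tX n) = ∫⁻ x, h x := by
  have e1 : ∀ n : Fin d → ℤ, ∫⁻ x in unitCube d, h (x + tX n) =
      ∫⁻ x in (fun x => x - tX n) ⁻¹' unitCube d, h x := by
    intro n
    have := (measurePreserving_sub_right (volume : Measure E₁) (tX n)).setLIntegral_comp_preimage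
      (s := unitCube d) unitCube_meas (f := fun x => h (x + tX n)) (by fun_prop)
    rw [← this]; simp
  simp_rw [e1]
  rw [← lintegral_iUnion]
  · have : (⋃ n : Fin d → ℤ, (fun x : E₁ => x - tX n) ⁻¹' unitCube d) = Set.univ := by
      rw [Set.eq_univ_iff_forall]
      intro x
      rw [Set.mem_iUnion]
      refine ⟨fun i => ⌊x i⌋, ?_⟩
      intro i
      simp only [tX, PiLp.sub_apply, Set.mem_Ico]
      constructor
      · linarith [Int.floor_le (x i)]
      · linarith [Int.lt_floor_add_one (x i)]
    rw [this, Measure.restrict_univ]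
  · intro n
    exact (measurable_id.sub_const _) unitCube_meas
  · intro n m hnm
    rw [Function.onFun, Set.disjoint_left]
    intro x hx hy
    apply hnm
    ext i
    have h1 := hx i
    have h2 := hy i
    simp only [tX, PiLp.sub_apply, Set.mem_Ico] at h1 h2
    have h3 : ((n i : ℤ) : ℝ) < m i + 1 := by linarith
    have h4 : ((m i : ℤ) : ℝ) < n i + 1 := by linarith
    have h5 : n i < m i + 1 := by exact_mod_cast h3
    have h6 : m i < n i + 1 := by exact_mod_cast h4
    omega

theorem cube_dist (x y : E₁) (hx : x ∈ unitCube d) (hy : y ∈ unitCube d) : ‖y - x‖ ^ 2 ≤ d := by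
  rw [EuclideanSpace.norm_sq_eq]
  calc _ ≤ ∑ i : Fin d, (1:ℝ) := by
        refine Finset.sum_le_sum fun i _ => ?_
        have h1 := hx i
        have h2 := hy i
        rw [Set.mem_Ico] at h1 h2
        rw [PiLp.sub_apply, Real.norm_eq_abs, sq_abs]
        nlinarith
    _ = d := by simp

/-- cube majorant of the Gaussian -/
noncomputable def pX (n : Fin d → ℤ) (w : E₁) : ℝ≥0∞ :=
  ENNReal.ofReal (Real.exp (Real.pi * d)) *
    ∫⁻ x in unitCube d, ENNReal.ofReal (grX (Real.pi / 2) (x + tX n - w))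

/-- total mass constant -/
noncomputable def bX (d : ℕ) : ℝ≥0∞ := ENNReal.ofReal (Real.exp (Real.pi * d)) *
    ∫⁻ x : EuclideanSpace ℝ (Fin d), ENNReal.ofReal (grX (Real.pi / 2) x)

theorem bX_lt_top : bX d < ∞ := by
  unfold bX
  refine ENNReal.mul_lt_top ENNReal.ofReal_lt_top ?_
  have := (grX_integrable (V := E₁) (b := Real.pi / 2) (by positivity)).lintegral_lt_top
  exact this

theorem pX_meas (n : Fin d → ℤ) : Measurable (pX n : E₁ → ℝ≥0∞) := by
  unfold pX
  refine Measurable.const_mul ?_ _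
  have : Measurable (fun q : E₁ × E₁ => ENNReal.ofReal (grX (Real.pi / 2) (q.2 + tX n - q.1))) :=
    ENNReal.measurable_ofReal.comp (Continuous.measurable (by fun_prop))
  exact this.lintegral_prod_right'

theorem pX_ge (n : Fin d → ℤ) (w x : E₁) (hx : x ∈ unitCube d) :
    ENNReal.ofReal (grX Real.pi (x + tX n - w)) ≤ pX n w := by
  unfold pX
  have hm : Measurable (fun y : E₁ => ENNReal.ofReal (grX (Real.pi / 2) (y + tX n - w))) :=
    ENNReal.measurable_ofReal.comp (Continuous.measurable (by fun_prop))
  rw [← lintegral_const_mul _ hm]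
  calc _ = ∫⁻ y in unitCube d, ENNReal.ofReal (grX Real.pi (x + tX n - w)) := by
        rw [setLIntegral_const, unitCube_vol, mul_one]
    _ ≤ _ := by
        refine setLIntegral_mono' unitCube_meas fun y hy => ?_
        rw [← ENNReal.ofReal_mul (Real.exp_pos _).le]
        refine ENNReal.ofReal_le_ofReal ?_
        unfold grX
        rw [← Real.exp_add, Real.exp_le_exp]
        have h1 := cube_dist x y hx hy
        have h2 : y + tX n - w = (x + tX n - w) + (y - x) := by abel
        have h3 : ‖y + tX n - w‖ ^ 2 ≤ 2 * ‖x + tX n - w‖ ^ 2 + 2 * ‖y - x‖ ^ 2 := by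
          rw [h2]
          have h4 := norm_add_le (x + tX n - w) (y - x)
          have h5 := norm_nonneg ((x + tX n - w) + (y - x))
          nlinarith [sq_nonneg (‖x + tX n - w‖ - ‖y - x‖)]
        have h6 : ‖y + tX n - w‖ ^ 2 ≤ 2 * ‖x + tX n - w‖ ^ 2 + 2 * d := by linarith
        have := mul_le_mul_of_nonneg_left h6 (by positivity : 0 ≤ Real.pi / 2)
        linarith

theorem pX_tsum (w : E₁) : ∑' n, pX n w = bX d := by
  unfold pX bX
  rw [ENNReal.tsum_mul_left]
  congr 1
  rw [← lintegral_sub_right_eq_self _ w, ← cube_tsum]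
  exact ENNReal.measurable_ofReal.comp (Continuous.measurable (by fun_prop))

theorem pX_int (n : Fin d → ℤ) : ∫⁻ w, pX n w = bX d := by
  unfold pX bX
  rw [lintegral_const_mul]
  · congr 1
    rw [lintegral_lintegral_swap]
    · have : ∀ y : E₁, ∫⁻ w, ENNReal.ofReal (grX (Real.pi / 2) (y + tX n - w)) =
        ∫⁻ x : E₁, ENNReal.ofReal (grX (Real.pi / 2) x) := fun y =>
        lintegral_sub_left_eq_self (fun x => ENNReal.ofReal (grX (Real.pi / 2) x)) (y + tX n)
      simp_rw [this]
      rw [setLIntegral_const, unitCube_vol, mul_one]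
    · exact (ENNReal.measurable_ofReal.comp (Continuous.measurable (by fun_prop))).aemeasurable
  · have : Measurable (fun q : E₁ × E₁ => ENNReal.ofReal (grX (Real.pi / 2) (q.2 + tX n - q.1))) :=
      ENNReal.measurable_ofReal.comp (Continuous.measurable (by fun_prop))
    exact this.lintegral_prod_right'

theorem tsum_sq_le {ι : Type*} (a : ι → ℝ≥0∞) : ∑' k, a k ^ (2:ℝ) ≤ (∑' k, a k) ^ (2:ℝ) := by
  have h2 : ∀ z : ℝ≥0∞, z ^ (2:ℝ) = z * z := fun z => by
    rw [ENNReal.rpow_two, sq]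
  simp_rw [h2]
  rw [← ENNReal.tsum_mul_right]
  refine ENNReal.tsum_le_tsum fun k => ?_
  gcongr
  exact ENNReal.le_tsum k

/-- local norm -/
noncomputable def lX (f : E₁ → ℂ) (n : Fin d → ℤ) : ℝ≥0∞ :=
  (∫⁻ x in unitCube d, ‖f (x + tX n)‖ₑ ^ (2:ℝ)) ^ (1 / 2 : ℝ)

theorem wNorm_eq (s : ℝ≥0∞) (f : E₁ → ℂ) : wNorm d 2 s f = lqNorm Measure.count s (lX f) := by
  unfold wNorm
  have h : ∀ n, lX f n = lqNorm (volume.restrict (unitCube d)) 2 fun x => ‖f (x + tX n)‖ₑ := by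
    intro n
    unfold lqNorm lX
    rw [if_neg (by simp), ENNReal.toReal_ofNat]
  have h' := funext h
  rw [h']
  rfl
end

open MeasureTheory SchwartzMap Complex ENNReal NNReal

section
variable {d : ℕ}
local notation "E₁" => EuclideanSpace ℝ (Fin d)
local notation "E₂" => EuclideanSpace ℝ (Fin d ⊕ Fin d)
open scoped FourierTransform

theorem sq_half (X : ℝ≥0∞) : (X ^ (2:ℝ)) ^ (1 / 2 : ℝ) = X := by
  rw [← ENNReal.rpow_mul]; norm_num

theorem half_sq (X : ℝ≥0∞) : (X ^ (1 / 2 : ℝ)) ^ (2:ℝ) = X := by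
  rw [← ENNReal.rpow_mul]; norm_num

theorem gX_L2 (f : SchwartzMap E₁ ℂ) (u : E₁) (ζ : E₂) :
    (∫⁻ y, ‖gX f u ζ y‖ₑ ^ (2:ℝ)) ^ (1 / 2 : ℝ) ≤
      ∑' k, pX k (u + (2⁻¹ : ℝ) • wpart ζ) * lX f k := by
  have hf := f.continuous
  have hgc : Continuous (gX f u ζ) := by unfold gX; fun_prop
  rw [← sq_half (∑' k, pX k (u + (2⁻¹ : ℝ) • wpart ζ) * lX f k)]
  refine ENNReal.rpow_le_rpow ?_ (by norm_num)
  refine le_trans ?_ (tsum_sq_le _)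
  rw [← cube_tsum _ (hgc.enorm.measurable.pow_const _)]
  refine ENNReal.tsum_le_tsum fun k => ?_
  rw [ENNReal.mul_rpow_of_nonneg _ _ (by norm_num)]
  unfold lX
  have hm : Measurable fun x : E₁ => ‖f (x + tX k)‖ₑ ^ (2:ℝ) :=
    (Continuous.measurable (Continuous.enorm (hf.comp (by fun_prop)))).pow_const _
  rw [half_sq, ← lintegral_const_mul _ hm]
  refine setLIntegral_mono' unitCube_meas fun x hx => ?_
  rw [gX_enorm, ENNReal.mul_rpow_of_nonneg _ _ (by norm_num)]
  gcongr
  have : x + tX k - (2⁻¹ : ℝ) • wpart ζ - u = x + tX k - (u + (2⁻¹ : ℝ) • wpart ζ) := by abel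
  rw [this]
  exact pX_ge _ _ _ hx

/-- the discrete kernel -/
noncomputable def kX (σ : E₂ → ℂ) (n k : Fin d → ℤ) : ℝ≥0∞ :=
  ∫⁻ ζ, ∫⁻ u : E₁, pX n (u - (2⁻¹ : ℝ) • wpart ζ) * nX σ ζ * pX k (u + (2⁻¹ : ℝ) • wpart ζ)

theorem pX_measA (n : Fin d → ℤ) : Measurable fun p : E₂ × E₁ => pX n (p.2 - (2⁻¹ : ℝ) • wpart p.1) :=
  (pX_meas n).comp (Continuous.measurable (by fun_prop))

theorem pX_measB (n : Fin d → ℤ) : Measurable fun p : E₂ × E₁ => pX n (p.2 + (2⁻¹ : ℝ) • wpart p.1) :=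
  (pX_meas n).comp (Continuous.measurable (by fun_prop))

theorem kX_meas (σ : SchwartzMap E₂ ℂ) (n k : Fin d → ℤ) : Measurable fun p : E₂ × E₁ =>
    pX n (p.2 - (2⁻¹ : ℝ) • wpart p.1) * nX σ p.1 * pX k (p.2 + (2⁻¹ : ℝ) • wpart p.1) :=
  ((pX_measA n).mul ((nX_meas σ).comp measurable_fst)).mul (pX_measB k)

theorem kX_eq (σ : SchwartzMap E₂ ℂ) (n k : Fin d → ℤ) : kX σ n k =
    ∫⁻ p : E₂ × E₁, pX n (p.2 - (2⁻¹ : ℝ) • wpart p.1) * nX σ p.1 * pX k (p.2 + (2⁻¹ : ℝ) • wpart p.1)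
      ∂(volume.prod volume) := by
  unfold kX
  rw [lintegral_prod _ (kX_meas σ n k).aemeasurable]

theorem kX_row (σ : SchwartzMap E₂ ℂ) (n : Fin d → ℤ) :
    ∑' k, kX σ n k ≤ bX d * bX d * ∫⁻ ζ, nX σ ζ := by
  simp_rw [kX_eq]
  rw [← lintegral_tsum fun k => (kX_meas σ n k).aemeasurable]
  simp_rw [ENNReal.tsum_mul_left, pX_tsum]
  have hm : Measurable fun a : E₂ × E₁ => pX n (a.2 - (2⁻¹ : ℝ) • wpart a.1) * nX σ a.1 * bX d :=
    ((pX_measA n).mul ((nX_meas σ).comp measurable_fst)).mul_const _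
  rw [lintegral_prod _ hm.aemeasurable]
  rw [← lintegral_const_mul _ (nX_meas σ)]
  refine lintegral_mono fun ζ => ?_
  have e : ∀ u : E₁, pX n (u - (2⁻¹ : ℝ) • wpart ζ) * nX σ ζ * bX d =
    (nX σ ζ * bX d) * pX n (u - (2⁻¹ : ℝ) • wpart ζ) := fun u => by ring
  simp only [e]
  rw [lintegral_sub_right_eq_self (fun u => nX σ ζ * bX d * pX n u),
    lintegral_const_mul _ (pX_meas n), pX_int]
  exact le_of_eq (by ring)

theorem kX_col (σ : SchwartzMap E₂ ℂ) (k : Fin d → ℤ) :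
    ∑' n, kX σ n k ≤ bX d * bX d * ∫⁻ ζ, nX σ ζ := by
  simp_rw [kX_eq]
  rw [← lintegral_tsum fun n => (kX_meas σ n k).aemeasurable]
  simp_rw [ENNReal.tsum_mul_right, pX_tsum]
  have hm : Measurable fun a : E₂ × E₁ => bX d * nX σ a.1 * pX k (a.2 + (2⁻¹ : ℝ) • wpart a.1) :=
    (((nX_meas σ).comp measurable_fst).const_mul _).mul (pX_measB k)
  rw [lintegral_prod _ hm.aemeasurable]
  rw [← lintegral_const_mul _ (nX_meas σ)]
  refine lintegral_mono fun ζ => ?_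
  simp only
  rw [lintegral_add_right_eq_self (fun u => bX d * nX σ ζ * pX k u),
    lintegral_const_mul _ (pX_meas k), pX_int]
  exact le_of_eq (by ring)

theorem local_piece (σ : SchwartzMap E₂ ℂ) (f : SchwartzMap E₁ ℂ) (n : Fin d → ℤ) (ζ : E₂) (u : E₁) :
    (∫⁻ x in unitCube d, (ENNReal.ofReal (grX Real.pi (x + tX n + (2⁻¹ : ℝ) • wpart ζ - u)) *
        ‖𝓕⁻ (hX σ f u ζ) (x + tX n + wpart ζ)‖ₑ) ^ (2:ℝ)) ^ (1 / 2 : ℝ) ≤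
    pX n (u - (2⁻¹ : ℝ) • wpart ζ) * nX σ ζ * ∑' k, pX k (u + (2⁻¹ : ℝ) • wpart ζ) * lX f k := by
  refine le_trans ?_ (mul_le_mul_right (gX_L2 f u ζ) _)
  rw [← sq_half (pX n (u - (2⁻¹ : ℝ) • wpart ζ) * nX σ ζ), ← ENNReal.mul_rpow_of_nonneg _ _ (by norm_num)]
  refine ENNReal.rpow_le_rpow ?_ (by norm_num)
  rw [ENNReal.mul_rpow_of_nonneg _ _ (by norm_num), mul_assoc]
  refine le_trans ?_ (mul_le_mul_right (hX_L2 σ f u ζ (tX n + wpart ζ)) _)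
  have hm : Measurable fun x : E₁ => ‖𝓕⁻ (hX σ f u ζ) (x + (tX n + wpart ζ))‖ₑ ^ (2:ℝ) := by
    have h2 : Continuous fun x : E₁ => ((u, ζ), x + (tX n + wpart ζ)) := by fun_prop
    exact ((hX_meas1 σ f).comp h2.measurable).enorm.pow_const _
  rw [← lintegral_const_mul _ hm]
  refine le_trans ?_ (setLIntegral_le_lintegral (unitCube d) _)
  refine setLIntegral_mono' unitCube_meas fun x hx => ?_
  rw [ENNReal.mul_rpow_of_nonneg _ _ (by norm_num), add_assoc x (tX n) (wpart ζ)]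
  gcongr
  have : x + tX n + (2⁻¹ : ℝ) • wpart ζ - u = x + tX n - (u - (2⁻¹ : ℝ) • wpart ζ) := by abel
  rw [this]
  exact pX_ge _ _ _ hx

theorem local_bound (σ : SchwartzMap E₂ ℂ) (f : SchwartzMap E₁ ℂ) (n : Fin d → ℤ) :
    ENNReal.ofReal ((∫ v : E₁, grX (3 * Real.pi) v) ^ 2) * lX (weylOp σ f) n ≤
      ENNReal.ofReal ((Real.pi / (2 * Real.pi)) ^ (Module.finrank ℝ E₁ / 2 : ℝ)) *
      ∑' k, kX σ n k * lX f k := by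
  set c0 := ENNReal.ofReal ((∫ v : E₁, grX (3 * Real.pi) v) ^ 2) with hc0
  set c1 := ENNReal.ofReal ((Real.pi / (2 * Real.pi)) ^ (Module.finrank ℝ E₁ / 2 : ℝ)) with hc1
  set F : E₁ → (E₂ × E₁) → ℝ≥0∞ := fun x p =>
      ENNReal.ofReal (grX Real.pi (x + tX n + (2⁻¹ : ℝ) • wpart p.1 - p.2)) *
        ‖𝓕⁻ (hX σ f p.2 p.1) (x + tX n + wpart p.1)‖ₑ with hF
  have hFm : Measurable (Function.uncurry F) := hX_meas σ f (tX n)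
  have hpt : ∀ x : E₁, c0 * ‖weylOp σ f (x + tX n)‖ₑ ≤ c1 * ∫⁻ p, F x p ∂(volume.prod volume) := by
    intro x
    refine (weyl_bound σ f (x + tX n)).trans (le_of_eq ?_)
    rw [lintegral_prod]
    exact (hFm.comp measurable_prodMk_left).aemeasurable
  have hmink := aux_minkowski ((volume : Measure E₁).restrict (unitCube d))
    ((volume : Measure E₂).prod (volume : Measure E₁)) F hFm
  have hGm : Measurable fun x => ∫⁻ p, F x p ∂((volume : Measure E₂).prod (volume : Measure E₁)) :=
    hFm.lintegral_prod_right'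
  have h1 : c0 * lX (weylOp σ f) n ≤ c1 * (∫⁻ x in unitCube d,
      (∫⁻ p, F x p ∂(volume.prod volume)) ^ (2:ℝ)) ^ (1 / 2 : ℝ) := by
    unfold lX
    rw [← sq_half c0, ← sq_half c1, ← ENNReal.mul_rpow_of_nonneg _ _ (by norm_num),
      ← ENNReal.mul_rpow_of_nonneg _ _ (by norm_num)]
    refine ENNReal.rpow_le_rpow ?_ (by norm_num)
    rw [← lintegral_const_mul' _ _ (by
        exact (ENNReal.rpow_lt_top_of_nonneg (by norm_num) ENNReal.ofReal_ne_top).ne),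
      ← lintegral_const_mul _ (hGm.pow_const _)]
    refine lintegral_mono fun x => ?_
    rw [← ENNReal.mul_rpow_of_nonneg _ _ (by norm_num), ← ENNReal.mul_rpow_of_nonneg _ _ (by norm_num)]
    exact ENNReal.rpow_le_rpow (hpt x) (by norm_num)
  refine h1.trans (mul_le_mul_right (hmink.trans ?_) _)
  calc _ ≤ ∫⁻ p : E₂ × E₁, ∑' k, (pX n (p.2 - (2⁻¹ : ℝ) • wpart p.1) * nX σ p.1 *
          pX k (p.2 + (2⁻¹ : ℝ) • wpart p.1)) * lX f k ∂(volume.prod volume) := by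
        refine lintegral_mono fun p => ?_
        refine (local_piece σ f n p.1 p.2).trans (le_of_eq ?_)
        rw [← ENNReal.tsum_mul_left]
        refine tsum_congr fun k => ?_
        ring
    _ = ∑' k, kX σ n k * lX f k := by
        rw [lintegral_tsum fun k => ((kX_meas σ n k).mul_const _).aemeasurable]
        refine tsum_congr fun k => ?_
        rw [lintegral_mul_const _ (kX_meas σ n k), kX_eq]

theorem lq_mono {α : Type*} [MeasurableSpace α] (μ : Measure α) (p : ℝ≥0∞) {f g : α → ℝ≥0∞}
    (h : ∀ a, f a ≤ g a) : lqNorm μ p f ≤ lqNorm μ p g := by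
  unfold lqNorm
  split_ifs
  · exact essSup_mono_ae (Filter.Eventually.of_forall h)
  · refine ENNReal.rpow_le_rpow (lintegral_mono fun a => ENNReal.rpow_le_rpow (h a) (by positivity)) (by positivity)
end

/-- Weyl operators with symbols in the Sjöstrand class `M^{∞,1}` are
bounded on `W(L²,L^s)`. -/
theorem weyl_sjostrand_bounded_on_W_L2_Ls (d : ℕ) (s : ℝ≥0∞) (hs : 1 ≤ s) :
    ∃ C : ℝ, 0 < C ∧
      ∀ (σ : SchwartzMap (EuclideanSpace ℝ (Fin d ⊕ Fin d)) ℂ)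
        (f : SchwartzMap (EuclideanSpace ℝ (Fin d)) ℂ),
        wNorm d 2 s (weylOp ⇑σ ⇑f) ≤
          ENNReal.ofReal C * modNorm ∞ 1 ⇑σ * wNorm d 2 s ⇑f := by
  obtain ⟨c0, hc0⟩ : ∃ c0, c0 = ENNReal.ofReal ((∫ v : EuclideanSpace ℝ (Fin d), grX (3 * Real.pi) v) ^ 2) :=
    ⟨_, rfl⟩
  obtain ⟨c1, hc1⟩ : ∃ c1, c1 = ENNReal.ofReal ((Real.pi / (2 * Real.pi)) ^
    (Module.finrank ℝ (EuclideanSpace ℝ (Fin d)) / 2 : ℝ)) := ⟨_, rfl⟩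
  have hc0t : c0 ≠ ∞ := by rw [hc0]; exact ENNReal.ofReal_ne_top
  have hc1t : c1 ≠ ∞ := by rw [hc1]; exact ENNReal.ofReal_ne_top
  have hc00 : c0 ≠ 0 := by
    rw [hc0]
    have : 0 < ∫ v : EuclideanSpace ℝ (Fin d), grX (3 * Real.pi) v := by
      refine (integral_pos_iff_support_of_nonneg (fun v => (grX_pos _ _).le)
        (grX_integrable (by positivity))).2 ?_
      have : Function.support (fun v : EuclideanSpace ℝ (Fin d) => grX (3 * Real.pi) v) = Set.univ := by
        ext v; simp [(grX_pos (3 * Real.pi) v).ne']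
      rw [this]
      exact NeZero.pos _
    simp only [ne_eq, ENNReal.ofReal_eq_zero, not_le]
    positivity
  set A : ℝ≥0∞ := c0⁻¹ * c1 * (bX d * bX d) with hA
  have hAt : A ≠ ∞ := by
    have := (bX_lt_top (d := d)).ne
    have h0 : c0⁻¹ ≠ ∞ := ENNReal.inv_ne_top.2 hc00
    exact ENNReal.mul_ne_top (ENNReal.mul_ne_top h0 hc1t) (ENNReal.mul_ne_top this this)
  refine ⟨A.toReal + 1, by positivity, fun σ f => ?_⟩
  have hAC : A ≤ ENNReal.ofReal (A.toReal + 1) := by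
    rw [← ENNReal.ofReal_toReal hAt]
    refine ENNReal.ofReal_le_ofReal ?_
    rw [ENNReal.toReal_ofReal ENNReal.toReal_nonneg]; linarith
  rw [wNorm_eq, wNorm_eq]
  calc _ ≤ lqNorm Measure.count s (fun n => ∑' k, (c0⁻¹ * c1 * kX σ n k) * lX f k) := by
        refine lq_mono _ _ fun n => ?_
        have h := local_bound σ f n
        rw [← hc0, ← hc1] at h
        calc lX (weylOp σ f) n = c0⁻¹ * (c0 * lX (weylOp σ f) n) := by
              rw [← mul_assoc, ENNReal.inv_mul_cancel hc00 hc0t, one_mul]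
          _ ≤ c0⁻¹ * (c1 * ∑' k, kX σ n k * lX f k) := mul_le_mul_right h _
          _ = _ := by
              rw [← ENNReal.tsum_mul_left, ← ENNReal.tsum_mul_left]
              refine tsum_congr fun k => ?_
              ring
    _ ≤ (A * ∫⁻ ζ, nX σ ζ) * lqNorm Measure.count s (lX f) := by
        refine aux_schur s hs _ _ (fun n => ?_) (fun k => ?_) _
        · rw [ENNReal.tsum_mul_left, hA, mul_assoc _ (bX d * bX d)]
          exact mul_le_mul_right (kX_row σ n) _
        · rw [ENNReal.tsum_mul_left, hA, mul_assoc _ (bX d * bX d)]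
          exact mul_le_mul_right (kX_col σ k) _
    _ ≤ _ := by
        gcongr
        exact nX_int_le σ
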